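/- Let n ≥ 1, suppose (A,b) satisfies Setting B, let r be the invariant measure (the a.e.-unique measurable ℤⁿ-periodic function with ∫_Y r² < ∞, ∫_Y r = 1 and ∫_Y r(A:D²φ + b·∇φ) = 0 for every twice continuously differentiable ℤⁿ-periodic φ), and assume the centering condition ∫_Y r·b = 0 (componentwise). Then for each j ∈ {1,…,n} there exists a measurable ℤⁿ-periodic function χ : ℝⁿ → ℝ with ∫_Y χ² < ∞ and ∫_Y χ = 0, admitting a weak gradient g : ℝⁿ → ℝⁿ and a weak Hessian H : ℝⁿ → ℝ^{n×n} that are measurable, ℤⁿ-periodic, square-integrable over Y, with H symmetric-valued — meaning ∫_{ℝⁿ} χ ∂_i φ = −∫_{ℝⁿ} g_i φ and ∫_{ℝⁿ} χ ∂²_{ij} φ = ∫_{ℝⁿ} H_{ij} φ for every smooth compactly supported φ : ℝⁿ → ℝ and all i,j — such that −A:H − b·g = b_j almost everywhere in ℝⁿ; moreover χ is unique up to equality almost everywhere. -/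

import Mathlib

open MeasureTheory

noncomputable section

/-- The unit cell `Y = (0,1)^n`. -/
def unitCell (n : ℕ) : Set (Fin n → ℝ) := Set.univ.pi fun _ => Set.Ioo (0 : ℝ) 1

/-- Frobenius norm squared of a matrix. -/
def frobSq {n : ℕ} (M : Matrix (Fin n) (Fin n) ℝ) : ℝ := ∑ i, ∑ j, (M i j) ^ 2

/-- Frobenius inner product of two matrices. -/
def frobInner {n : ℕ} (M N : Matrix (Fin n) (Fin n) ℝ) : ℝ := ∑ i, ∑ j, M i j * N i j

/-- Euclidean norm squared of a vector. -/
def euclSq {n : ℕ} (v : Fin n → ℝ) : ℝ := ∑ i, (v i) ^ 2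

/-- Euclidean dot product. -/
def dotc {n : ℕ} (v w : Fin n → ℝ) : ℝ := ∑ i, v i * w i

/-- `ℤⁿ`-periodicity of a function on `ℝⁿ`. -/
def IsPeriodic {n : ℕ} {α : Type*} (f : (Fin n → ℝ) → α) : Prop :=
  ∀ (x : Fin n → ℝ) (k : Fin n → ℤ), f (x + fun i => (k i : ℝ)) = f x

/-- Partial derivative in direction `i`. -/
def pd {n : ℕ} (f : (Fin n → ℝ) → ℝ) (i : Fin n) (x : Fin n → ℝ) : ℝ :=
  fderiv ℝ f x (Pi.single i 1)

/-- Gradient. -/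
def grad {n : ℕ} (f : (Fin n → ℝ) → ℝ) (x : Fin n → ℝ) : Fin n → ℝ := fun i => pd f i x

/-- Hessian matrix. -/
def hess {n : ℕ} (f : (Fin n → ℝ) → ℝ) (x : Fin n → ℝ) : Matrix (Fin n) (Fin n) ℝ :=
  Matrix.of fun i j => pd (pd f j) i x

/-- Laplacian. -/
def lap {n : ℕ} (f : (Fin n → ℝ) → ℝ) (x : Fin n → ℝ) : ℝ := ∑ i, pd (pd f i) i x

/-- Jacobian matrix of a vector field: `(jac w x) i j = ∂_j w_i (x)`. -/
def jac {n : ℕ} (w : (Fin n → ℝ) → Fin n → ℝ) (x : Fin n → ℝ) : Matrix (Fin n) (Fin n) ℝ :=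
  Matrix.of fun i j => pd (fun y => w y i) j x

/-- Divergence of a vector field. -/
def divg {n : ℕ} (w : (Fin n → ℝ) → Fin n → ℝ) (x : Fin n → ℝ) : ℝ :=
  ∑ i, pd (fun y => w y i) i x

/-- Setting B: symmetric-valued, measurable, `ℤⁿ`-periodic, essentially bounded coefficients,
uniform ellipticity, and the Cordes-type condition with constant `δ ∈ (n/(n+π²), 1]`. -/
structure SettingB {n : ℕ} (A : (Fin n → ℝ) → Matrix (Fin n) (Fin n) ℝ)
    (b : (Fin n → ℝ) → Fin n → ℝ) (lam Lam δ : ℝ) : Prop where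
  symm : ∀ x, (A x).IsSymm
  measA : ∀ i j, Measurable fun x => A x i j
  measb : ∀ i, Measurable fun x => b x i
  perA : IsPeriodic A
  perb : IsPeriodic b
  bddA : ∃ C : ℝ, ∀ᵐ x ∂(volume : Measure (Fin n → ℝ)), frobSq (A x) ≤ C
  bddb : ∃ C : ℝ, ∀ᵐ x ∂(volume : Measure (Fin n → ℝ)), euclSq (b x) ≤ C
  lam_pos : 0 < lam
  lam_le_Lam : lam ≤ Lam
  ellip : ∀ᵐ x ∂(volume : Measure (Fin n → ℝ)), ∀ ξ : Fin n → ℝ,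
    lam * euclSq ξ ≤ dotc ξ (Matrix.mulVec (A x) ξ) ∧
      dotc ξ (Matrix.mulVec (A x) ξ) ≤ Lam * euclSq ξ
  delta_mem : δ ∈ Set.Ioc ((n : ℝ) / ((n : ℝ) + Real.pi ^ 2)) 1
  cordes : ∀ᵐ x ∂(volume : Measure (Fin n → ℝ)),
    (frobSq (A x) + euclSq (b x)) / (Matrix.trace (A x)) ^ 2 ≤ 1 / ((n : ℝ) - 1 + δ)

/-- The renormalization function `γ = tr A / (|A|² + |b|²)`. -/
def gam {n : ℕ} (A : (Fin n → ℝ) → Matrix (Fin n) (Fin n) ℝ)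
    (b : (Fin n → ℝ) → Fin n → ℝ) (x : Fin n → ℝ) : ℝ :=
  Matrix.trace (A x) / (frobSq (A x) + euclSq (b x))

/-- The constant `κ = (δ − n/(n+π²))·(n+π²)/π²`. -/
def kappa (n : ℕ) (δ : ℝ) : ℝ :=
  (δ - (n : ℝ) / ((n : ℝ) + Real.pi ^ 2)) * (((n : ℝ) + Real.pi ^ 2) / Real.pi ^ 2)

/-- The invariant measure: measurable, `ℤⁿ`-periodic, square-integrable over `Y`,
with unit mass over `Y`, solving the stationary FPK equation in the very weak sense. -/
def IsInvariantMeasure {n : ℕ} (A : (Fin n → ℝ) → Matrix (Fin n) (Fin n) ℝ)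
    (b : (Fin n → ℝ) → Fin n → ℝ) (r : (Fin n → ℝ) → ℝ) : Prop :=
  Measurable r ∧ IsPeriodic r ∧
    IntegrableOn (fun x => (r x) ^ 2) (unitCell n) ∧
    (∫ x in unitCell n, r x) = 1 ∧
    ∀ φ : (Fin n → ℝ) → ℝ, ContDiff ℝ 2 φ → IsPeriodic φ →
      (∫ x in unitCell n,
        r x * (frobInner (A x) (hess φ x) + dotc (b x) (grad φ x))) = 0

/-- The bilinear form `B₂`. -/
def B2 {n : ℕ} (A : (Fin n → ℝ) → Matrix (Fin n) (Fin n) ℝ)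
    (b : (Fin n → ℝ) → Fin n → ℝ) (v w : (Fin n → ℝ) → Fin n → ℝ) : ℝ :=
  (∫ x in unitCell n,
    divg v x * (frobInner (gam A b x • A x) (jac w x) + dotc (gam A b x • b x) (w x)))
  + (1 / 2) * ∫ x in unitCell n,
      frobInner (jac v x - (jac v x).transpose) (jac w x - (jac w x).transpose)

/-- A strong `H²_per(Y)`-type corrector for the cell problem
`-A:D²χ - b·∇χ = b_j`: `χ ∈ L²_per(Y)` with zero mean over `Y`, admitting a weak
gradient `g` and a weak Hessian `H` (measurable, periodic, square-integrable over
`Y`, `H` symmetric-valued), such that `-A:H - b·g = b_j` a.e. -/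
def IsCorrector {n : ℕ} (A : (Fin n → ℝ) → Matrix (Fin n) (Fin n) ℝ)
    (b : (Fin n → ℝ) → Fin n → ℝ) (j : Fin n) (χ : (Fin n → ℝ) → ℝ) : Prop :=
  Measurable χ ∧ IsPeriodic χ ∧
    IntegrableOn (fun x => (χ x) ^ 2) (unitCell n) ∧
    (∫ x in unitCell n, χ x) = 0 ∧
    ∃ (g : (Fin n → ℝ) → Fin n → ℝ) (H : (Fin n → ℝ) → Matrix (Fin n) (Fin n) ℝ),
      (∀ i, Measurable fun x => g x i) ∧ (∀ i k, Measurable fun x => H x i k) ∧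
      IsPeriodic g ∧ IsPeriodic H ∧
      (∀ i, IntegrableOn (fun x => (g x i) ^ 2) (unitCell n)) ∧
      (∀ i k, IntegrableOn (fun x => (H x i k) ^ 2) (unitCell n)) ∧
      (∀ᵐ x ∂(volume : Measure (Fin n → ℝ)), (H x).IsSymm) ∧
      (∀ φ : (Fin n → ℝ) → ℝ, ContDiff ℝ (⊤ : ℕ∞) φ → HasCompactSupport φ →
        (∀ i, (∫ x : Fin n → ℝ, χ x * pd φ i x) = -∫ x : Fin n → ℝ, g x i * φ x) ∧
        (∀ i k, (∫ x : Fin n → ℝ, χ x * pd (pd φ k) i x)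
          = ∫ x : Fin n → ℝ, H x i k * φ x)) ∧
      (∀ᵐ x ∂(volume : Measure (Fin n → ℝ)),
        -(frobInner (A x) (H x)) - dotc (b x) (g x) = b x j)


open Complex Set Filter Topology
open scoped ENNReal ComplexConjugate InnerProductSpace

/-- Lebesgue measure on the unit cell. -/
abbrev cellMeasure (n : ℕ) : Measure (Fin n → ℝ) := volume.restrict (unitCell n)

lemma unitCell_ae_eq_Ioc (n : ℕ) :
    unitCell n =ᵐ[volume]
      {x : Fin n → ℝ | ∀ i, x i ∈ Ioc ((0 : Fin n → ℝ) i) ((0 : Fin n → ℝ) i + 1)} := by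
  have h1 := Measure.univ_pi_Ioo_ae_eq_Icc (μ := fun _ : Fin n => (volume : Measure ℝ))
    (f := fun _ => (0 : ℝ)) (g := fun _ => 1)
  have h2 := Measure.univ_pi_Ioc_ae_eq_Icc (μ := fun _ : Fin n => (volume : Measure ℝ))
    (f := fun _ => (0 : ℝ)) (g := fun _ => 1)
  have h3 := h1.trans h2.symm
  have h4 : {x : Fin n → ℝ | ∀ i, x i ∈ Ioc ((0 : Fin n → ℝ) i) ((0 : Fin n → ℝ) i + 1)} =
      Set.univ.pi fun _ : Fin n => Ioc (0 : ℝ) 1 := by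
    ext x
    simp
  rw [h4]
  exact h3

lemma unitCell_ae_eq_Ico (n : ℕ) :
    unitCell n =ᵐ[volume] (Set.univ.pi fun _ : Fin n => Ico (0 : ℝ) 1) := by
  have h1 := Measure.univ_pi_Ioo_ae_eq_Icc (μ := fun _ : Fin n => (volume : Measure ℝ))
    (f := fun _ => (0 : ℝ)) (g := fun _ => 1)
  have h2 := Measure.univ_pi_Ico_ae_eq_Icc (μ := fun _ : Fin n => (volume : Measure ℝ))
    (f := fun _ => (0 : ℝ)) (g := fun _ => 1)
  exact h1.trans h2.symm

lemma measurableSet_unitCell (n : ℕ) : MeasurableSet (unitCell n) :=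
  MeasurableSet.univ_pi fun _ => measurableSet_Ioo

instance isProbabilityMeasure_cellMeasure (n : ℕ) : IsProbabilityMeasure (cellMeasure n) := by
  constructor
  rw [Measure.restrict_apply_univ, unitCell, volume_pi, Measure.pi_pi]
  simp

/-- The exponential with frequency `k`. -/
def expo {n : ℕ} (k : Fin n → ℤ) (x : Fin n → ℝ) : ℂ :=
  cexp (2 * Real.pi * I * ∑ i, (k i : ℂ) * (x i : ℂ))

lemma mFourier_coe_eq_expo {n : ℕ} (k : Fin n → ℤ) (x : Fin n → ℝ) :
    UnitAddTorus.mFourier k (fun i => (x i : UnitAddCircle)) = expo k x := by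
  simp only [UnitAddTorus.mFourier, ContinuousMap.coe_mk, fourier_coe_apply, expo]
  rw [← Complex.exp_sum, Finset.mul_sum]
  congr 1
  refine Finset.sum_congr rfl fun i _ => ?_
  simp
  ring

lemma norm_expo {n : ℕ} (k : Fin n → ℤ) (x : Fin n → ℝ) : ‖expo k x‖ = 1 := by
  have : 2 * Real.pi * I * ∑ i, (k i : ℂ) * (x i : ℂ) =
      ((2 * Real.pi * ∑ i, (k i : ℝ) * x i : ℝ) : ℂ) * I := by
    push_cast; ring
  rw [expo, this, Complex.norm_exp_ofReal_mul_I]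

lemma conj_expo {n : ℕ} (k : Fin n → ℤ) (x : Fin n → ℝ) : conj (expo k x) = expo (-k) x := by
  rw [expo, ← Complex.exp_conj, expo]
  congr 1
  simp [map_sum, Complex.conj_ofNat]

lemma contDiff_expo {n : ℕ} (k : Fin n → ℤ) {m : WithTop ℕ∞} :
    ContDiff ℝ m (expo k : (Fin n → ℝ) → ℂ) := by
  unfold expo
  refine ContDiff.cexp (contDiff_const.mul (ContDiff.sum fun i _ => contDiff_const.mul ?_))
  exact Complex.ofRealCLM.contDiff.comp (contDiff_apply ℝ ℝ i)

lemma expo_periodic {n : ℕ} (k : Fin n → ℤ) : IsPeriodic (expo k : (Fin n → ℝ) → ℂ) := by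
  intro x m
  rw [← mFourier_coe_eq_expo, ← mFourier_coe_eq_expo]
  congr 1
  ext i
  simp

lemma memLp_expo {n : ℕ} (k : Fin n → ℤ) (p : ℝ≥0∞) : MemLp (expo k) p (cellMeasure n) :=
  MemLp.of_bound (contDiff_expo k (m := 0)).continuous.aestronglyMeasurable 1
    (Eventually.of_forall fun x => (norm_expo k x).le)

/-- Complex square-integrable functions on the unit cell. -/
abbrev L2 (n : ℕ) := Lp ℂ 2 (cellMeasure n)

/-- The `k`-th Fourier coefficient on the unit cell. -/
def coef {n : ℕ} (f : (Fin n → ℝ) → ℂ) (k : Fin n → ℤ) : ℂ :=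
  ∫ x, conj (expo k x) * f x ∂(cellMeasure n)

/-- The exponentials as elements of `L²`. -/
def expoLp {n : ℕ} (k : Fin n → ℤ) : L2 n := (memLp_expo k 2).toLp (expo k)

lemma inner_expoLp {n : ℕ} (k : Fin n → ℤ) (f : L2 n) : ⟪expoLp k, f⟫_ℂ = coef f k := by
  rw [L2.inner_def]
  refine integral_congr_ae ?_
  filter_upwards [(memLp_expo k 2).coeFn_toLp] with x hx
  rw [expoLp, hx, RCLike.inner_apply, mul_comm]

lemma coef_congr {n : ℕ} {f g : (Fin n → ℝ) → ℂ} (h : f =ᵐ[cellMeasure n] g) (k : Fin n → ℤ) :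
    coef f k = coef g k := by
  refine integral_congr_ae ?_
  filter_upwards [h] with x hx
  rw [hx]

section Torus

/-- The Haar probability measure on the circle. -/
@[reducible]
def measureSpaceUnitAddCircleHaar : MeasureSpace UnitAddCircle :=
  ⟨AddCircle.haarAddCircle⟩

attribute [local instance] measureSpaceUnitAddCircleHaar

/-- The measurable section of the torus taking values in the half-open unit cell. -/
def torusSection (n : ℕ) (y : UnitAddTorus (Fin n)) : Fin n → ℝ :=
  (UnitAddTorus.measurableEquivPiIoc (0 : Fin n → ℝ) y).1

lemma coe_torusSection {n : ℕ} (y : UnitAddTorus (Fin n)) :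
    (fun i => (torusSection n y i : UnitAddCircle)) = y :=
  (UnitAddTorus.measurableEquivPiIoc (0 : Fin n → ℝ)).symm_apply_apply y

lemma measurePreserving_torusSection (n : ℕ) :
    MeasurePreserving (torusSection n) (volume : Measure (UnitAddTorus (Fin n)))
      (cellMeasure n) := by
  have h1 := UnitAddTorus.measurePreserving_equivPiIoc (0 : Fin n → ℝ)
  have h2 : MeasurableSet {x : Fin n → ℝ |
      ∀ i, x i ∈ Ioc ((0 : Fin n → ℝ) i) ((0 : Fin n → ℝ) i + 1)} := by
    simpa [Set.pi] using
      MeasurableSet.univ_pi' fun _ : Fin n => measurableSet_Ioc (a := (0 : ℝ)) (b := 1)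
  refine ⟨measurable_subtype_coe.comp (MeasurableEquiv.measurable _), ?_⟩
  rw [cellMeasure, Measure.restrict_congr_set (unitCell_ae_eq_Ioc n)]
  have h3 : torusSection n = Subtype.val ∘ UnitAddTorus.measurableEquivPiIoc (0 : Fin n → ℝ) := rfl
  rw [h3, ← Measure.map_map measurable_subtype_coe (MeasurableEquiv.measurable _), h1.map_eq]
  exact map_comap_subtype_coe h2 volume

lemma mFourierCoeff_comp_torusSection {n : ℕ} {f : (Fin n → ℝ) → ℂ}
    (hf : AEStronglyMeasurable f (cellMeasure n)) (k : Fin n → ℤ) :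
    UnitAddTorus.mFourierCoeff (f ∘ torusSection n) k = coef f k := by
  have h := measurePreserving_torusSection n
  rw [coef, ← h.map_eq, integral_map h.measurable.aemeasurable]
  · unfold UnitAddTorus.mFourierCoeff
    congr 1
    ext y
    rw [conj_expo, ← mFourier_coe_eq_expo, coe_torusSection]
    rfl
  · rw [h.map_eq]
    exact (Complex.continuous_conj.comp_aestronglyMeasurable
      (contDiff_expo k (m := 0)).continuous.aestronglyMeasurable).mul hf

lemma eq_zero_of_coef_eq_zero {n : ℕ} (f : L2 n) (hf : ∀ k, coef f k = 0) : f = 0 := by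
  have h := measurePreserving_torusSection n
  have hm : MemLp (f ∘ torusSection n) 2 (volume : Measure (UnitAddTorus (Fin n))) :=
    (Lp.memLp f).comp_measurePreserving h
  have h0 : hm.toLp _ = 0 := by
    refine UnitAddTorus.mFourierBasis.repr.injective ?_
    ext k
    rw [UnitAddTorus.mFourierBasis_repr, map_zero]
    have : UnitAddTorus.mFourierCoeff (hm.toLp _) k =
        UnitAddTorus.mFourierCoeff (f ∘ torusSection n) k := by
      refine integral_congr_ae ?_
      filter_upwards [hm.coeFn_toLp] with y hy
      rw [hy]
    rw [this, mFourierCoeff_comp_torusSection (Lp.memLp f).1, hf]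
    rfl
  rw [← norm_eq_zero, Lp.norm_toLp] at h0
  have h4 : eLpNorm (f ∘ torusSection n) 2 (volume : Measure (UnitAddTorus (Fin n))) =
      eLpNorm f 2 (cellMeasure n) :=
    eLpNorm_comp_measurePreserving (Lp.memLp f).1 h
  rw [h4, ← Lp.norm_def] at h0
  exact norm_eq_zero.mp h0

lemma orthonormal_expoLp (n : ℕ) : Orthonormal ℂ (expoLp : (Fin n → ℤ) → L2 n) := by
  rw [orthonormal_iff_ite]
  intro j k
  rw [inner_expoLp, expoLp, coef_congr (memLp_expo k 2).coeFn_toLp,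
    ← mFourierCoeff_comp_torusSection (memLp_expo k 2).1]
  have h := (orthonormal_iff_ite.mp (UnitAddTorus.orthonormal_mFourier (d := Fin n))) j k
  rw [← h, L2.inner_def]
  refine integral_congr_ae ?_
  filter_upwards [UnitAddTorus.coeFn_mFourierLp 2 j, UnitAddTorus.coeFn_mFourierLp 2 k]
    with y h1 h2
  rw [h1, h2, RCLike.inner_apply, Function.comp_apply, ← mFourier_coe_eq_expo, coe_torusSection,
    UnitAddTorus.mFourier_neg, smul_eq_mul, mul_comm]

end Torus

/-- The Fourier basis of `L²` of the unit cell. -/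
def fourierCellBasis (n : ℕ) : HilbertBasis (Fin n → ℤ) ℂ (L2 n) :=
  HilbertBasis.mkOfOrthogonalEqBot (orthonormal_expoLp n) (by
    rw [Submodule.eq_bot_iff]
    intro f hf
    refine eq_zero_of_coef_eq_zero f fun k => ?_
    rw [← inner_expoLp]
    exact (Submodule.mem_orthogonal _ _).mp hf _ (Submodule.subset_span ⟨k, rfl⟩))

lemma coe_fourierCellBasis (n : ℕ) : ⇑(fourierCellBasis n) = expoLp :=
  HilbertBasis.coe_mkOfOrthogonalEqBot _ _

lemma fourierCellBasis_repr {n : ℕ} (f : L2 n) (k : Fin n → ℤ) :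
    (fourierCellBasis n).repr f k = coef f k := by
  rw [HilbertBasis.repr_apply_apply, coe_fourierCellBasis, inner_expoLp]

lemma eq_of_coef_eq {n : ℕ} {f g : L2 n} (h : ∀ k, coef f k = coef g k) : f = g := by
  refine (fourierCellBasis n).repr.injective ?_
  ext k
  rw [fourierCellBasis_repr, fourierCellBasis_repr, h]

/-- The fractional part of a vector, componentwise. -/
def fractVec {n : ℕ} (x : Fin n → ℝ) : Fin n → ℝ := fun i => Int.fract (x i)

lemma measurable_fractVec {n : ℕ} : Measurable (fractVec : (Fin n → ℝ) → Fin n → ℝ) :=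
  measurable_pi_lambda _ fun i => measurable_fract.comp (measurable_pi_apply i)

lemma fractVec_add {n : ℕ} (x : Fin n → ℝ) (k : Fin n → ℤ) :
    fractVec (x + fun i => (k i : ℝ)) = fractVec x := by
  ext i
  simp [fractVec]

lemma fractVec_of_mem {n : ℕ} {x : Fin n → ℝ}
    (hx : x ∈ Set.univ.pi fun _ : Fin n => Ico (0 : ℝ) 1) :
    fractVec x = x := by
  ext i
  exact Int.fract_eq_self.mpr (hx i (mem_univ i))

lemma fractVec_mem {n : ℕ} (x : Fin n → ℝ) :
    fractVec x ∈ Set.univ.pi fun _ : Fin n => Ico (0 : ℝ) 1 :=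
  fun i _ => ⟨Int.fract_nonneg (x i), Int.fract_lt_one (x i)⟩

lemma fractVec_add_floor {n : ℕ} (x : Fin n → ℝ) :
    (fractVec x + fun i => ((⌊x i⌋ : ℤ) : ℝ)) = x := by
  ext i
  simp [fractVec]

lemma unitCell_subset_Ico (n : ℕ) :
    unitCell n ⊆ Set.univ.pi fun _ : Fin n => Ico (0 : ℝ) 1 :=
  Set.pi_mono fun _ _ => Ioo_subset_Ico_self

lemma isPeriodic_comp_fractVec {n : ℕ} {α : Type*} (f : (Fin n → ℝ) → α) :
    IsPeriodic fun x => f (fractVec x) := fun x k =>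
  congrArg f (fractVec_add x k)

lemma comp_fractVec_ae_eq {n : ℕ} {α : Type*} (f : (Fin n → ℝ) → α) :
    (fun x => f (fractVec x)) =ᵐ[cellMeasure n] f := by
  filter_upwards [ae_restrict_mem (measurableSet_unitCell n)] with x hx
  rw [fractVec_of_mem (unitCell_subset_Ico n hx)]

lemma cellMeasure_eq_Ico (n : ℕ) :
    cellMeasure n = volume.restrict (Set.univ.pi fun _ : Fin n => Ico (0 : ℝ) 1) :=
  Measure.restrict_congr_set (unitCell_ae_eq_Ico n)

/-- A periodic property holding almost everywhere in the unit cell holds almost everywhere. -/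
lemma ae_of_ae_cell {n : ℕ} {P : (Fin n → ℝ) → Prop}
    (hP : ∀ x (k : Fin n → ℤ), P x → P (x + fun i => (k i : ℝ)))
    (h : ∀ᵐ x ∂(cellMeasure n), P x) : ∀ᵐ x, P x := by
  have hQ : MeasurableSet (Set.univ.pi fun _ : Fin n => Ico (0 : ℝ) 1) :=
    MeasurableSet.univ_pi fun _ => measurableSet_Ico
  rw [cellMeasure_eq_Ico, ae_restrict_iff' hQ] at h
  have h2 : ∀ᵐ x : Fin n → ℝ, ∀ k : Fin n → ℤ,
      (x + fun i => (k i : ℝ)) ∈ (Set.univ.pi fun _ : Fin n => Ico (0 : ℝ) 1) →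
        P (x + fun i => (k i : ℝ)) := by
    rw [ae_all_iff]
    intro k
    exact (measurePreserving_add_right volume (fun i => (k i : ℝ))).quasiMeasurePreserving.ae h
  filter_upwards [h2] with x hx
  have h3 : (x + fun i => (((fun i => -⌊x i⌋) : Fin n → ℤ) i : ℝ)) = fractVec x := by
    ext i
    simp [fractVec, Int.fract, sub_eq_add_neg]
  have h4 := hx (fun i => -⌊x i⌋)
  rw [h3] at h4
  have h5 := hP _ (fun i => ⌊x i⌋) (h4 (fractVec_mem x))
  rwa [fractVec_add_floor] at h5

/-- The translate of the half-open unit cell by `m`. -/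
def shiftCell {n : ℕ} (m : Fin n → ℤ) : Set (Fin n → ℝ) :=
  (fun x => x + fun i => ((-m) i : ℝ)) ⁻¹' (Set.univ.pi fun _ : Fin n => Ico (0 : ℝ) 1)

lemma mem_shiftCell {n : ℕ} {m : Fin n → ℤ} {x : Fin n → ℝ} :
    x ∈ shiftCell m ↔ m = fun i => ⌊x i⌋ := by
  simp only [shiftCell, mem_preimage, Set.mem_pi, mem_univ, forall_const, Pi.add_apply, mem_Ico,
    funext_iff, Pi.neg_apply, Int.cast_neg]
  refine forall_congr' fun i => ?_
  rw [eq_comm, Int.floor_eq_iff]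
  constructor <;> intro h <;> constructor <;> linarith [h.1, h.2]

lemma measurableSet_shiftCell {n : ℕ} (m : Fin n → ℤ) : MeasurableSet (shiftCell m) :=
  (measurable_add_const _) (MeasurableSet.univ_pi fun _ => measurableSet_Ico)

lemma shiftCell_preimage {n : ℕ} (m : Fin n → ℤ) :
    (fun x : Fin n → ℝ => x + fun i => (m i : ℝ)) ⁻¹' shiftCell m =
      Set.univ.pi fun _ : Fin n => Ico (0 : ℝ) 1 := by
  ext x
  have : ((x + fun i => (m i : ℝ)) + fun i => ((-m) i : ℝ)) = x := by ext i; simp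
  rw [shiftCell, mem_preimage, mem_preimage, this]

/-- Integral of a function on a translate of the unit cell. -/
lemma integral_shiftCell {n : ℕ} (F : (Fin n → ℝ) → ℂ) (m : Fin n → ℤ) :
    ∫ x in shiftCell m, F x = ∫ x, F (x + fun i => (m i : ℝ)) ∂(cellMeasure n) := by
  have h := (measurePreserving_add_right (volume : Measure (Fin n → ℝ))
    (fun i => (m i : ℝ))).setIntegral_preimage_emb
    (MeasurableEquiv.addRight (fun i => (m i : ℝ))).measurableEmbedding F (shiftCell m)
  rw [shiftCell_preimage] at h
  rw [cellMeasure_eq_Ico, h]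

lemma integrableOn_shiftCell {n : ℕ} {F : (Fin n → ℝ) → ℂ} {m : Fin n → ℤ}
    (h : Integrable (fun x => F (x + fun i => (m i : ℝ))) (cellMeasure n)) :
    IntegrableOn F (shiftCell m) := by
  have h1 := (measurePreserving_add_right (volume : Measure (Fin n → ℝ))
    (fun i => (m i : ℝ))).integrableOn_comp_preimage (f := F) (s := shiftCell m)
    (MeasurableEquiv.addRight (fun i => (m i : ℝ))).measurableEmbedding
  rw [shiftCell_preimage, IntegrableOn, ← cellMeasure_eq_Ico] at h1
  exact h1.mp h

/-- The values of a compactly supported function vanish on all but finitely many translates of the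
unit cell. -/
lemma exists_finset_shift {n : ℕ} {ψ : (Fin n → ℝ) → ℂ} (hψ : HasCompactSupport ψ) :
    ∃ S : Finset (Fin n → ℤ), ∀ x, ψ x ≠ 0 → (fun i => ⌊x i⌋) ∈ S := by
  obtain ⟨R, hR⟩ := hψ.isCompact.isBounded.subset_closedBall 0
  refine ⟨Fintype.piFinset fun _ => Finset.Icc ⌊-R⌋ ⌊R⌋, fun x hx => ?_⟩
  have h1 := hR (subset_tsupport _ hx)
  rw [mem_closedBall_zero_iff] at h1
  rw [Fintype.mem_piFinset]
  intro i
  have h2 := abs_le.mp ((norm_le_pi_norm x i).trans h1)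
  exact Finset.mem_Icc.mpr ⟨Int.floor_le_floor h2.1, Int.floor_le_floor h2.2⟩

/-- Unfolding of the integral of a periodic function against a compactly supported one. -/
lemma unfold_integral {n : ℕ} {F ψ : (Fin n → ℝ) → ℂ} (hFp : IsPeriodic F)
    (hF : Integrable F (cellMeasure n)) (hψ : Continuous ψ) (hψc : HasCompactSupport ψ)
    {S : Finset (Fin n → ℤ)} (hS : ∀ x, ψ x ≠ 0 → (fun i => ⌊x i⌋) ∈ S) :
    Integrable (fun x => F x * ψ x) ∧
      ∫ x, F x * ψ x = ∫ x, F x * ∑ m ∈ S, ψ (x + fun i => (m i : ℝ)) ∂(cellMeasure n) := by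
  obtain ⟨C, hC⟩ := hψ.bounded_above_of_compact_support hψc
  have hi : ∀ m : Fin n → ℤ,
      Integrable (fun x => F x * ψ (x + fun i => (m i : ℝ))) (cellMeasure n) := fun m =>
    hF.mul_bdd (c := C) (hψ.comp (continuous_add_const _)).aestronglyMeasurable
      (Eventually.of_forall fun x => hC _)
  have hs : Function.support (fun x => F x * ψ x) ⊆ ⋃ m ∈ S, shiftCell m := by
    intro x hx
    have h1 : ψ x ≠ 0 := right_ne_zero_of_mul hx
    exact mem_iUnion₂.mpr ⟨_, hS x h1, mem_shiftCell.mpr rfl⟩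
  have hon : ∀ m ∈ S, IntegrableOn (fun x => F x * ψ x) (shiftCell m) := by
    intro m _
    refine integrableOn_shiftCell ?_
    simp_rw [hFp _ m]
    exact hi m
  have hI : IntegrableOn (fun x => F x * ψ x) (⋃ m ∈ S, shiftCell m) :=
    (integrableOn_finset_iUnion (s := S)).mpr hon
  refine ⟨(integrableOn_iff_integrable_of_support_subset hs).mp hI, ?_⟩
  rw [← setIntegral_eq_integral_of_forall_compl_eq_zero (s := ⋃ m ∈ S, shiftCell m)
    (fun x hx => Function.notMem_support.mp fun h => hx (hs h)),
    integral_biUnion_finset S (fun m _ => measurableSet_shiftCell m) ?_ hon]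
  · simp_rw [Finset.mul_sum]
    rw [integral_finsetSum S fun m _ => hi m]
    refine Finset.sum_congr rfl fun m _ => ?_
    rw [integral_shiftCell]
    simp_rw [hFp _ m]
  · intro a _ b _ hab
    refine Set.disjoint_left.mpr fun x h1 h2 => hab ?_
    rw [mem_shiftCell.mp h1, mem_shiftCell.mp h2]

lemma hasFDerivAt_ofReal_comp {n : ℕ} {φ : (Fin n → ℝ) → ℝ} {x : Fin n → ℝ}
    (h : DifferentiableAt ℝ φ x) :
    HasFDerivAt (fun y => (φ y : ℂ)) (Complex.ofRealCLM.comp (fderiv ℝ φ x)) x :=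
  Complex.ofRealCLM.hasFDerivAt.comp x h.hasFDerivAt

lemma fderiv_ofReal_comp {n : ℕ} {φ : (Fin n → ℝ) → ℝ} {x : Fin n → ℝ}
    (h : DifferentiableAt ℝ φ x) (i : Fin n) :
    fderiv ℝ (fun y => (φ y : ℂ)) x (Pi.single i 1) = (pd φ i x : ℂ) := by
  rw [(hasFDerivAt_ofReal_comp h).fderiv]
  rfl

lemma differentiable_expo {n : ℕ} (k : Fin n → ℤ) :
    Differentiable ℝ (expo k : (Fin n → ℝ) → ℂ) :=
  (contDiff_expo k (m := 1)).differentiable one_ne_zero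

lemma fderiv_expo {n : ℕ} (k : Fin n → ℤ) (x : Fin n → ℝ) (i : Fin n) :
    fderiv ℝ (expo k) x (Pi.single i 1) = 2 * Real.pi * I * k i * expo k x := by
  have h1 : ∀ j : Fin n, HasFDerivAt (fun y : Fin n → ℝ => (k j : ℂ) * (y j : ℂ))
      ((k j : ℂ) • Complex.ofRealCLM.comp (ContinuousLinearMap.proj j)) x := fun j =>
    (Complex.ofRealCLM.comp
      (ContinuousLinearMap.proj (R := ℝ) (φ := fun _ : Fin n => ℝ) j)).hasFDerivAt.const_mul _
  have h2 := ((HasFDerivAt.fun_sum fun j (_ : j ∈ Finset.univ) => h1 j).const_mul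
    (2 * Real.pi * I)).cexp
  have h3 : fderiv ℝ (expo k) x = _ := h2.fderiv
  rw [h3]
  have h4 : (∑ j, (k j : ℂ) • Complex.ofRealCLM.comp (ContinuousLinearMap.proj (R := ℝ)
      (φ := fun _ : Fin n => ℝ) j)) (Pi.single i 1) = k i := by
    rw [sum_apply, Finset.sum_eq_single i]
    · simp
    · intro j _ hj
      simp [Pi.single_eq_of_ne hj]
    · simp
  rw [smul_apply, smul_apply, h4, expo, smul_eq_mul, smul_eq_mul]
  ring

lemma continuous_pd {n : ℕ} {φ : (Fin n → ℝ) → ℝ} (h : ContDiff ℝ 1 φ) (i : Fin n) :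
    Continuous (pd φ i) :=
  (h.continuous_fderiv one_ne_zero).clm_apply continuous_const

lemma contDiff_pd {n : ℕ} {φ : (Fin n → ℝ) → ℝ} (h : ContDiff ℝ (⊤ : ℕ∞) φ) (i : Fin n) :
    ContDiff ℝ (⊤ : ℕ∞) (pd φ i) :=
  (h.fderiv_right (m := (⊤ : ℕ∞)) (by simp)).clm_apply contDiff_const

lemma hasCompactSupport_pd {n : ℕ} {φ : (Fin n → ℝ) → ℝ} (h : HasCompactSupport φ) (i : Fin n) :
    HasCompactSupport (pd φ i) := h.fderiv_apply (𝕜 := ℝ) _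

lemma hasCompactSupport_ofReal_comp {n : ℕ} {φ : (Fin n → ℝ) → ℝ} (h : HasCompactSupport φ) :
    HasCompactSupport fun x => (φ x : ℂ) :=
  h.comp_left (g := Complex.ofReal) Complex.ofReal_zero

/-- Integration against a compactly supported function is given, on periodic functions, by an
element of `L²` of the unit cell. -/
lemma exists_periodization {n : ℕ} {φ : (Fin n → ℝ) → ℝ} (hφ : Continuous φ)
    (hφc : HasCompactSupport φ) :
    ∃ Ψ : L2 n, ∀ F : (Fin n → ℝ) → ℂ, IsPeriodic F → ∀ hF : MemLp F 2 (cellMeasure n),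
      ∫ x, F x * (φ x : ℂ) = ⟪Ψ, hF.toLp F⟫_ℂ := by
  have hc := hasCompactSupport_ofReal_comp hφc
  have hcont : Continuous fun x => (φ x : ℂ) := Complex.continuous_ofReal.comp hφ
  obtain ⟨S, hS⟩ := exists_finset_shift hc
  obtain ⟨C, hC⟩ := hcont.bounded_above_of_compact_support hc
  have hm : MemLp (fun x => ∑ m ∈ S, (φ (x + fun i => (m i : ℝ)) : ℂ)) 2 (cellMeasure n) :=
    memLp_finsetSum _ fun m _ => MemLp.of_bound
      (hcont.comp (continuous_add_const _)).aestronglyMeasurable C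
      (Eventually.of_forall fun x => hC _)
  refine ⟨hm.toLp _, fun F hFp hF => ?_⟩
  rw [(unfold_integral hFp (hF.integrable one_le_two) hcont hc hS).2, L2.inner_def]
  refine integral_congr_ae ?_
  filter_upwards [hm.coeFn_toLp, hF.coeFn_toLp] with x h1 h2
  rw [h1, h2, RCLike.inner_apply, map_sum]
  simp

/-- `v` is the weak partial derivative of `w` in direction `i`. -/
def HasWeakPd {n : ℕ} (i : Fin n) (w v : (Fin n → ℝ) → ℂ) : Prop :=
  ∀ φ : (Fin n → ℝ) → ℝ, ContDiff ℝ (⊤ : ℕ∞) φ → HasCompactSupport φ →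
    ∫ x, w x * (pd φ i x : ℂ) = -∫ x, v x * (φ x : ℂ)

lemma integral_expo_mul_pd {n : ℕ} (k : Fin n → ℤ) (i : Fin n) {φ : (Fin n → ℝ) → ℝ}
    (hφ : ContDiff ℝ (⊤ : ℕ∞) φ) (hφc : HasCompactSupport φ) :
    ∫ x, expo k x * (pd φ i x : ℂ) = -(2 * Real.pi * I * k i) * ∫ x, expo k x * (φ x : ℂ) := by
  have hd : Differentiable ℝ φ := hφ.differentiable (by simp)
  have he : Continuous (expo k : (Fin n → ℝ) → ℂ) := (contDiff_expo k (m := 0)).continuous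
  have hp := continuous_pd (hφ.of_le (by simp)) i
  have key := integral_mul_fderiv_eq_neg_fderiv_mul_of_integrable (μ := volume) (f := expo k)
    (g := fun x => (φ x : ℂ)) (v := Pi.single i (1 : ℝ)) ?_ ?_ ?_
    (fun x _ => differentiable_expo k x)
    (fun x _ => (hasFDerivAt_ofReal_comp (hd x)).differentiableAt)
  · simp_rw [fderiv_ofReal_comp (hd _), fderiv_expo] at key
    rw [key, neg_mul, ← integral_const_mul]
    congr 2
    ext x
    ring
  · refine Continuous.integrable_of_hasCompactSupport ?_
      (hasCompactSupport_ofReal_comp hφc).mul_left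
    simp_rw [fderiv_expo]
    exact (continuous_const.mul he).mul (Complex.continuous_ofReal.comp hφ.continuous)
  · simp_rw [fderiv_ofReal_comp (hd _)]
    exact (he.mul (Complex.continuous_ofReal.comp hp)).integrable_of_hasCompactSupport
      (hasCompactSupport_ofReal_comp (hasCompactSupport_pd hφc i)).mul_left
  · exact (he.mul (Complex.continuous_ofReal.comp hφ.continuous)).integrable_of_hasCompactSupport
      (hasCompactSupport_ofReal_comp hφc).mul_left

/-- Periodic square-integrable functions with the expected Fourier coefficients are weak
derivatives. -/
lemma hasWeakPd_of_coef {n : ℕ} (i : Fin n) {w v : (Fin n → ℝ) → ℂ} (hwp : IsPeriodic w)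
    (hvp : IsPeriodic v) (hw : MemLp w 2 (cellMeasure n)) (hv : MemLp v 2 (cellMeasure n))
    (h : ∀ k, coef v k = 2 * Real.pi * I * k i * coef w k) : HasWeakPd i w v := by
  intro φ hφ hφc
  obtain ⟨Ψ, hΨ⟩ := exists_periodization hφ.continuous hφc
  obtain ⟨Ψ', hΨ'⟩ := exists_periodization (continuous_pd (hφ.of_le (by simp)) i)
    (hasCompactSupport_pd hφc i)
  have he : ∀ k : Fin n → ℤ, ⟪Ψ', expoLp k⟫_ℂ = -(2 * Real.pi * I * k i) * ⟪Ψ, expoLp k⟫_ℂ := by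
    intro k
    have h1 := hΨ _ (expo_periodic k) (memLp_expo k 2)
    have h2 := hΨ' _ (expo_periodic k) (memLp_expo k 2)
    rw [expoLp, ← h1, ← h2, integral_expo_mul_pd k i hφ hφc]
  rw [hΨ' w hwp hw, hΨ v hvp hv, ← (fourierCellBasis n).tsum_inner_mul_inner,
    ← (fourierCellBasis n).tsum_inner_mul_inner,
    ← tsum_neg]
  refine tsum_congr fun k => ?_
  rw [coe_fourierCellBasis, he, inner_expoLp, inner_expoLp, coef_congr hw.coeFn_toLp,
    coef_congr hv.coeFn_toLp, h]
  ring

/-- A smooth bump on the line whose integer translates sum to one. -/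
def stepBump (t : ℝ) : ℝ := Real.smoothTransition (t + 1) - Real.smoothTransition t

lemma stepBump_eq_zero {t : ℝ} (h : t ∉ Ioo (-1 : ℝ) 1) : stepBump t = 0 := by
  rw [mem_Ioo, not_and_or, not_lt, not_lt] at h
  rcases h with h | h
  · rw [stepBump, Real.smoothTransition.zero_of_nonpos (by linarith),
      Real.smoothTransition.zero_of_nonpos (by linarith), sub_zero]
  · rw [stepBump, Real.smoothTransition.one_of_one_le (by linarith),
      Real.smoothTransition.one_of_one_le (by linarith), sub_self]

lemma stepBump_add {t : ℝ} (h : t ∈ Ioo (0 : ℝ) 1) : stepBump (t + (-1)) + stepBump t = 1 := by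
  rw [stepBump, stepBump, Real.smoothTransition.one_of_one_le (x := t + 1) (by linarith [h.1]),
    Real.smoothTransition.zero_of_nonpos (x := t + (-1)) (by linarith [h.2])]
  ring_nf

/-- A smooth compactly supported function whose integer translates sum to one. -/
def cutoff {n : ℕ} (x : Fin n → ℝ) : ℝ := ∏ i, stepBump (x i)

/-- The translates which meet the unit cell. -/
def cutoffShifts (n : ℕ) : Finset (Fin n → ℤ) := Fintype.piFinset fun _ => {-1, 0, 1}

lemma contDiff_cutoff {n : ℕ} : ContDiff ℝ (⊤ : ℕ∞) (cutoff : (Fin n → ℝ) → ℝ) := by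
  have h : ContDiff ℝ (⊤ : ℕ∞) stepBump :=
    (Real.smoothTransition.contDiff.comp (contDiff_id.add contDiff_const)).sub
      Real.smoothTransition.contDiff
  exact contDiff_prod fun i _ => h.comp (contDiff_apply ℝ ℝ i)

lemma mem_Ioo_of_cutoff_ne_zero {n : ℕ} {x : Fin n → ℝ} (h : cutoff x ≠ 0) (i : Fin n) :
    x i ∈ Ioo (-1 : ℝ) 1 := by
  by_contra h1
  exact h (Finset.prod_eq_zero (Finset.mem_univ i) (stepBump_eq_zero h1))

lemma tsupport_cutoff_subset {n : ℕ} :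
    tsupport (cutoff : (Fin n → ℝ) → ℝ) ⊆ Icc (fun _ => -1) (fun _ => 1) :=
  closure_minimal (fun _ hx => ⟨fun i => (mem_Ioo_of_cutoff_ne_zero hx i).1.le,
    fun i => (mem_Ioo_of_cutoff_ne_zero hx i).2.le⟩) isClosed_Icc

lemma hasCompactSupport_cutoff {n : ℕ} : HasCompactSupport (cutoff : (Fin n → ℝ) → ℝ) :=
  isCompact_Icc.of_isClosed_subset (isClosed_tsupport _) tsupport_cutoff_subset

lemma floor_mem_cutoffShifts {n : ℕ} {x : Fin n → ℝ} (h : x ∈ tsupport (cutoff (n := n))) :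
    (fun i => ⌊x i⌋) ∈ cutoffShifts n := by
  rw [cutoffShifts, Fintype.mem_piFinset]
  intro i
  simp only [Finset.mem_insert, Finset.mem_singleton]
  have h0 := tsupport_cutoff_subset h
  have h1 : -1 ≤ ⌊x i⌋ := Int.le_floor.mpr (by simpa using h0.1 i)
  have h2 : ⌊x i⌋ < 2 := Int.floor_lt.mpr (lt_of_le_of_lt (h0.2 i) (by norm_num))
  omega

lemma sum_cutoff {n : ℕ} {x : Fin n → ℝ} (hx : x ∈ unitCell n) :
    ∑ m ∈ cutoffShifts n, cutoff (x + fun i => (m i : ℝ)) = 1 := by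
  have h := Finset.prod_univ_sum (fun _ : Fin n => ({-1, 0, 1} : Finset ℤ))
    (fun i j => stepBump (x i + (j : ℝ)))
  simp only [cutoffShifts, cutoff, Pi.add_apply]
  rw [← h]
  refine Finset.prod_eq_one fun i _ => ?_
  have h1 := hx i (mem_univ i)
  have h2 : stepBump (x i + 1) = 0 := stepBump_eq_zero fun h3 => by linarith [h3.2, h1.1]
  rw [Finset.sum_insert (by simp), Finset.sum_pair (by norm_num)]
  simpa [h2] using stepBump_add h1

lemma isOpen_unitCell (n : ℕ) : IsOpen (unitCell n) :=
  isOpen_set_pi finite_univ fun _ _ => isOpen_Ioo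

lemma sum_pd_cutoff {n : ℕ} (i : Fin n) {x : Fin n → ℝ} (hx : x ∈ unitCell n) :
    ∑ m ∈ cutoffShifts n, pd cutoff i (x + fun i => (m i : ℝ)) = 0 := by
  have hd : Differentiable ℝ (cutoff : (Fin n → ℝ) → ℝ) :=
    contDiff_cutoff.differentiable (by simp)
  have h1 : HasFDerivAt (fun y : Fin n → ℝ =>
      ∑ m ∈ cutoffShifts n, cutoff (y + fun i => (m i : ℝ)))
      (∑ m ∈ cutoffShifts n, fderiv ℝ cutoff (x + fun i => (m i : ℝ))) x :=
    HasFDerivAt.fun_sum fun m _ => (hasFDerivAt_comp_add_right _).mpr (hd _).hasFDerivAt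
  have h2 : HasFDerivAt (fun y : Fin n → ℝ =>
      ∑ m ∈ cutoffShifts n, cutoff (y + fun i => (m i : ℝ))) (0 : (Fin n → ℝ) →L[ℝ] ℝ) x := by
    refine (hasFDerivAt_const (1 : ℝ) x).congr_of_eventuallyEq ?_
    filter_upwards [(isOpen_unitCell n).mem_nhds hx] with y hy
    exact sum_cutoff hy
  have h3 := congrArg (fun L => L (Pi.single i (1 : ℝ))) (h1.unique h2)
  simpa [pd] using h3

/-- The Fourier coefficients of a weak derivative. -/
lemma integrable_mul_of_isPeriodic {n : ℕ} {F : (Fin n → ℝ) → ℂ} {φ : (Fin n → ℝ) → ℝ}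
    (hFp : IsPeriodic F) (hF : Integrable F (cellMeasure n)) (hφ : Continuous φ)
    (hφc : HasCompactSupport φ) : Integrable fun x => F x * (φ x : ℂ) := by
  obtain ⟨S, hS⟩ := exists_finset_shift (hasCompactSupport_ofReal_comp hφc)
  exact (unfold_integral hFp hF (Complex.continuous_ofReal.comp hφ)
    (hasCompactSupport_ofReal_comp hφc) hS).1

lemma HasWeakPd.coef_eq {n : ℕ} {i : Fin n} {w v : (Fin n → ℝ) → ℂ} (h : HasWeakPd i w v)
    (hwp : IsPeriodic w) (hvp : IsPeriodic v) (hw : Integrable w (cellMeasure n))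
    (hv : Integrable v (cellMeasure n)) (k : Fin n → ℤ) :
    coef v k = 2 * Real.pi * I * k i * coef w k := by
  have hη := contDiff_cutoff (n := n)
  have hηc := hasCompactSupport_cutoff (n := n)
  have hηd : Differentiable ℝ (cutoff : (Fin n → ℝ) → ℝ) := hη.differentiable (by simp)
  set E : (Fin n → ℝ) → ℂ := expo (-k) with hE
  have hEc : ContDiff ℝ (⊤ : ℕ∞) E := contDiff_expo (-k)
  have hEd : Differentiable ℝ E := differentiable_expo (-k)
  have hre : ContDiff ℝ (⊤ : ℕ∞) fun x => (E x).re := Complex.reCLM.contDiff.comp hEc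
  have him : ContDiff ℝ (⊤ : ℕ∞) fun x => (E x).im := Complex.imCLM.contDiff.comp hEc
  have hφ₁ : ContDiff ℝ (⊤ : ℕ∞) fun x => cutoff x * (E x).re := hη.mul hre
  have hφ₂ : ContDiff ℝ (⊤ : ℕ∞) fun x => cutoff x * (E x).im := hη.mul him
  have hc₁ : HasCompactSupport fun x => cutoff x * (E x).re := hηc.mul_right
  have hc₂ : HasCompactSupport fun x => cutoff x * (E x).im := hηc.mul_right
  have hpd₁ := continuous_pd (hφ₁.of_le (by simp)) i
  have hpd₂ := continuous_pd (hφ₂.of_le (by simp)) i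
  have eq₁ := h _ hφ₁ hc₁
  have eq₂ := h _ hφ₂ hc₂
  have hpd : ∀ x, (pd (fun x => cutoff x * (E x).re) i x : ℂ) +
      I * (pd (fun x => cutoff x * (E x).im) i x : ℂ) =
      E x * (pd cutoff i x : ℂ) - 2 * Real.pi * I * k i * (E x * (cutoff x : ℂ)) := by
    intro x
    have e₁ : HasFDerivAt (fun x => (E x).re) (Complex.reCLM.comp (fderiv ℝ E x)) x :=
      Complex.reCLM.hasFDerivAt.comp x (hEd x).hasFDerivAt
    have e₂ : HasFDerivAt (fun x => (E x).im) (Complex.imCLM.comp (fderiv ℝ E x)) x :=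
      Complex.imCLM.hasFDerivAt.comp x (hEd x).hasFDerivAt
    have f₁ : pd (fun x => cutoff x * (E x).re) i x =
        cutoff x * (fderiv ℝ E x (Pi.single i 1)).re + (E x).re * pd cutoff i x := by
      rw [pd, ((hηd x).hasFDerivAt.fun_mul e₁).fderiv]
      simp [pd]
    have f₂ : pd (fun x => cutoff x * (E x).im) i x =
        cutoff x * (fderiv ℝ E x (Pi.single i 1)).im + (E x).im * pd cutoff i x := by
      rw [pd, ((hηd x).hasFDerivAt.fun_mul e₂).fderiv]
      simp [pd]
    have f₃ := fderiv_expo (-k) x i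
    rw [← hE] at f₃
    have f₄ := Complex.re_add_im (fderiv ℝ E x (Pi.single i 1))
    have f₅ := Complex.re_add_im (E x)
    rw [f₃] at f₄
    rw [f₁, f₂]
    rw [f₃]
    push_cast at f₄ ⊢
    simp only [Pi.neg_apply, Int.cast_neg] at f₄ ⊢
    linear_combination (cutoff x : ℂ) * f₄ + (pd cutoff i x : ℂ) * f₅
  have main : ∫ x, (w x * E x * (pd cutoff i x : ℂ) -
      2 * Real.pi * I * k i * (w x * E x * (cutoff x : ℂ))) =
      -∫ x, v x * E x * (cutoff x : ℂ) := by
    have e₁ : (fun x => w x * E x * (pd cutoff i x : ℂ) -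
        2 * Real.pi * I * k i * (w x * E x * (cutoff x : ℂ))) = fun x =>
        w x * (pd (fun x => cutoff x * (E x).re) i x : ℂ) +
        I * (w x * (pd (fun x => cutoff x * (E x).im) i x : ℂ)) := by
      ext x
      linear_combination -w x * hpd x
    have e₂ : (fun x => v x * E x * (cutoff x : ℂ)) = fun x =>
        v x * ((cutoff x * (E x).re : ℝ) : ℂ) +
        I * (v x * ((cutoff x * (E x).im : ℝ) : ℂ)) := by
      ext x
      push_cast
      linear_combination -v x * (cutoff x : ℂ) * Complex.re_add_im (E x)
    rw [e₁, e₂, integral_add (integrable_mul_of_isPeriodic hwp hw hpd₁ (hasCompactSupport_pd hc₁ i))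
      ((integrable_mul_of_isPeriodic hwp hw hpd₂ (hasCompactSupport_pd hc₂ i)).const_mul I),
      integral_add (integrable_mul_of_isPeriodic hvp hv hφ₁.continuous hc₁)
      ((integrable_mul_of_isPeriodic hvp hv hφ₂.continuous hc₂).const_mul I),
      integral_const_mul, integral_const_mul, eq₁, eq₂]
    ring
  have perMul : ∀ {F : (Fin n → ℝ) → ℂ}, IsPeriodic F → IsPeriodic fun x => F x * E x := by
    intro F hF x m
    change F _ * E _ = F x * E x
    rw [hF, hE, expo_periodic]
  have intMul : ∀ {F : (Fin n → ℝ) → ℂ}, Integrable F (cellMeasure n) →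
      Integrable (fun x => F x * E x) (cellMeasure n) := fun hF =>
    hF.mul_bdd (c := 1) hEc.continuous.aestronglyMeasurable
      (Eventually.of_forall fun x => (norm_expo (-k) x).le)
  have hS₀ : ∀ x : Fin n → ℝ, ((cutoff x : ℝ) : ℂ) ≠ 0 → (fun i => ⌊x i⌋) ∈ cutoffShifts n :=
    fun x hx => floor_mem_cutoffShifts (subset_tsupport _ (by simpa using hx))
  have hS₁ : ∀ x : Fin n → ℝ, ((pd cutoff i x : ℝ) : ℂ) ≠ 0 →
      (fun i => ⌊x i⌋) ∈ cutoffShifts n := by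
    intro x hx
    refine floor_mem_cutoffShifts (support_fderiv_subset ℝ (f := cutoff (n := n)) ?_)
    rw [Function.mem_support]
    intro h0
    refine hx ?_
    rw [pd, h0]
    simp
  have hη' : Continuous fun x : Fin n → ℝ => ((cutoff x : ℝ) : ℂ) :=
    Complex.continuous_ofReal.comp hη.continuous
  have hpη := continuous_pd (hη.of_le (by simp)) i
  have hpη' : Continuous fun x => ((pd cutoff i x : ℝ) : ℂ) :=
    Complex.continuous_ofReal.comp hpη
  have unf₀ : ∀ {F : (Fin n → ℝ) → ℂ}, IsPeriodic F → Integrable F (cellMeasure n) →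
      ∫ x, F x * E x * (cutoff x : ℂ) = coef F k := by
    intro F hFp hF
    rw [(unfold_integral (perMul hFp) (intMul hF) hη' (hasCompactSupport_ofReal_comp hηc) hS₀).2]
    refine integral_congr_ae ?_
    filter_upwards [ae_restrict_mem (measurableSet_unitCell n)] with x hx
    rw [conj_expo, ← Complex.ofReal_sum, sum_cutoff hx, Complex.ofReal_one]
    ring
  have unf₁ : ∫ x, w x * E x * (pd cutoff i x : ℂ) = 0 := by
    rw [(unfold_integral (perMul hwp) (intMul hw) hpη'
      (hasCompactSupport_ofReal_comp (hasCompactSupport_pd hηc i)) hS₁).2]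
    refine integral_eq_zero_of_ae ?_
    filter_upwards [ae_restrict_mem (measurableSet_unitCell n)] with x hx
    rw [← Complex.ofReal_sum, sum_pd_cutoff i hx, Complex.ofReal_zero, mul_zero]
    rfl
  rw [integral_sub (integrable_mul_of_isPeriodic (perMul hwp) (intMul hw) hpη
      (hasCompactSupport_pd hηc i))
    ((integrable_mul_of_isPeriodic (perMul hwp) (intMul hw) hη.continuous hηc).const_mul _),
    integral_const_mul,
    unf₁, unf₀ hwp hw, unf₀ hvp hv] at main
  linear_combination main

section HilbertCore

variable {E : Type*} [NormedAddCommGroup E] [InnerProductSpace ℂ E]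

lemma eq_of_add_map_eq {K : E →L[ℂ] E} (hK : ‖K‖ < 1) {f f' : E} (h : f + K f = f' + K f') :
    f = f' := by
  by_contra hne
  have hpos : 0 < ‖f - f'‖ := norm_pos_iff.2 (sub_ne_zero.2 hne)
  have e : f - f' = -K (f - f') := by
    rw [map_sub, eq_neg_iff_add_eq_zero]
    have := sub_eq_zero.2 h
    rw [← this]; abel
  have h1 : ‖f - f'‖ ≤ ‖K‖ * ‖f - f'‖ := by
    conv_lhs => rw [e, norm_neg]
    exact K.le_opNorm _
  nlinarith

lemma exists_add_map_eq [CompleteSpace E] {K : E →L[ℂ] E} (hK : ‖K‖ < 1) (h : E) :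
    ∃ f, f + K f = h := by
  obtain ⟨u, hu⟩ : IsUnit (1 + K) := by
    have := isUnit_one_sub_of_norm_lt_one (x := -K) (by rwa [norm_neg])
    rwa [sub_neg_eq_add] at this
  refine ⟨(↑u⁻¹ : E →L[ℂ] E) h, ?_⟩
  have : ((u : E →L[ℂ] E) * (↑u⁻¹ : E →L[ℂ] E)) h = h := by rw [Units.mul_inv]; rfl
  rw [hu] at this
  simpa using this

/-- A Fredholm-type solvability criterion: a contraction perturbation of the identity, restricted
to the orthogonal complement of a vector `e`, attains every vector orthogonal to a nonzero
`ρ` annihilating its range. -/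
lemma exists_orthogonal_add_map_eq [CompleteSpace E] {K : E →L[ℂ] E} (hK : ‖K‖ < 1) {e ρ h : E}
    (hρ : ρ ≠ 0) (hann : ∀ f, ⟪e, f⟫_ℂ = 0 → ⟪ρ, f + K f⟫_ℂ = 0) (hh : ⟪ρ, h⟫_ℂ = 0) :
    ∃ f, ⟪e, f⟫_ℂ = 0 ∧ f + K f = h := by
  set P : E →L[ℂ] E := (ℂ ∙ e)ᗮ.starProjection with hP
  have hPn : ‖P‖ ≤ 1 := Submodule.starProjection_norm_le _
  have hmem : ∀ x, ⟪e, P x⟫_ℂ = 0 := fun x =>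
    Submodule.mem_orthogonal_singleton_iff_inner_right.1 (Submodule.starProjection_apply_mem _ x)
  have hPe : ∀ x, ⟪e, x⟫_ℂ = 0 → P x = x := fun x hx =>
    Submodule.starProjection_eq_self_iff.2
      (Submodule.mem_orthogonal_singleton_iff_inner_right.2 hx)
  have hPK : ‖P * K‖ < 1 :=
    (norm_mul_le _ _).trans_lt ((mul_le_of_le_one_left (norm_nonneg _) hPn).trans_lt hK)
  obtain ⟨f, hf⟩ := exists_add_map_eq hPK (P h)
  have hf0 : ⟪e, f⟫_ℂ = 0 := by
    have : f = P h - P (K f) := eq_sub_of_add_eq hf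
    rw [this, inner_sub_right, hmem, hmem, sub_zero]
  refine ⟨f, hf0, ?_⟩
  have hker : P (f + K f - h) = 0 := by
    rw [map_sub, map_add, hPe f hf0, sub_eq_zero]
    exact hf
  have hspan : f + K f - h ∈ (ℂ ∙ e) := by
    rw [hP, Submodule.starProjection_apply_eq_zero_iff, Submodule.orthogonal_orthogonal] at hker
    exact hker
  obtain ⟨c, hc⟩ := Submodule.mem_span_singleton.1 hspan
  have h1 : c * ⟪ρ, e⟫_ℂ = 0 := by
    rw [← inner_smul_right, hc, inner_sub_right, hann f hf0, hh, sub_zero]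
  rcases mul_eq_zero.1 h1 with h1 | h1
  · rw [h1, zero_smul] at hc
    exact (sub_eq_zero.1 hc.symm)
  · exfalso
    have h2 := hann ρ (by rw [← inner_conj_symm, h1, map_zero])
    rw [inner_add_right, inner_self_eq_norm_sq_to_K] at h2
    have h3 : ‖ρ‖ ^ 2 ≤ ‖K‖ * ‖ρ‖ ^ 2 := by
      have h4 : ((‖ρ‖ : ℂ)) ^ 2 = -⟪ρ, K ρ⟫_ℂ := eq_neg_of_add_eq_zero_left h2
      have h5 := congrArg norm h4
      rw [norm_neg, norm_pow, Complex.norm_real, norm_norm] at h5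
      refine h5.le.trans ?_
      calc ‖⟪ρ, K ρ⟫_ℂ‖ ≤ ‖ρ‖ * ‖K ρ‖ := norm_inner_le_norm _ _
        _ ≤ ‖ρ‖ * (‖K‖ * ‖ρ‖) := by gcongr; exact K.le_opNorm _
        _ = ‖K‖ * ‖ρ‖ ^ 2 := by ring
    have : 0 < ‖ρ‖ ^ 2 := pow_pos (norm_pos_iff.2 hρ) 2
    nlinarith

end HilbertCore

lemma hasSum_norm_coef_sq {n : ℕ} (f : L2 n) :
    HasSum (fun k => ‖coef f k‖ ^ 2) (‖f‖ ^ 2) := by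
  have h := (fourierCellBasis n).hasSum_inner_mul_inner f f
  have h2 : HasSum (fun k => (((‖coef f k‖ ^ 2 : ℝ)) : ℂ)) ((‖f‖ ^ 2 : ℝ) : ℂ) := by
    have e : ((‖f‖ ^ 2 : ℝ) : ℂ) = ⟪f, f⟫_ℂ := by
      rw [inner_self_eq_norm_sq_to_K]; push_cast; rfl
    rw [e]
    refine h.congr_fun fun k => ?_
    rw [← inner_conj_symm f, coe_fourierCellBasis, inner_expoLp, Complex.conj_mul']
    push_cast
    rfl
  exact_mod_cast h2

lemma coef_add {n : ℕ} (f g : L2 n) (k : Fin n → ℤ) :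
    coef (f + g : L2 n) k = coef f k + coef g k := by
  simp only [← inner_expoLp, inner_add_right]

lemma coef_smul {n : ℕ} (c : ℂ) (f : L2 n) (k : Fin n → ℤ) :
    coef (c • f : L2 n) k = c * coef f k := by
  simp only [← inner_expoLp, inner_smul_right]

lemma exists_fourierMultiplier {n : ℕ} {m : (Fin n → ℤ) → ℂ} {C : ℝ} (hm : ∀ k, ‖m k‖ ≤ C) :
    ∃ T : L2 n →L[ℂ] L2 n, ∀ f k, coef (T f) k = m k * coef f k := by
  have hC : 0 ≤ C := (norm_nonneg _).trans (hm 0)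
  have hle : ∀ (f : L2 n) k, ‖m k * coef f k‖ ^ 2 ≤ C ^ 2 * ‖coef f k‖ ^ 2 := by
    intro f k
    rw [norm_mul, mul_pow]
    gcongr
    exact hm k
  have hs : ∀ f : L2 n, Summable fun k => ‖m k * coef f k‖ ^ 2 := fun f =>
    Summable.of_nonneg_of_le (fun _ => by positivity) (hle f)
      ((hasSum_norm_coef_sq f).summable.mul_left _)
  have hmem : ∀ f : L2 n, Memℓp (fun k => m k * coef f k) 2 := fun f => by
    refine memℓp_gen ?_
    simpa using hs f
  have key : ∀ (f : L2 n) k,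
      coef ((fourierCellBasis n).repr.symm ⟨fun k => m k * coef f k, hmem f⟩ : L2 n) k =
        m k * coef f k := by
    intro f k
    rw [← fourierCellBasis_repr, LinearIsometryEquiv.apply_symm_apply]
  refine ⟨LinearMap.mkContinuous
    { toFun := fun f => (fourierCellBasis n).repr.symm ⟨fun k => m k * coef f k, hmem f⟩
      map_add' := fun f g => eq_of_coef_eq fun k => by
        rw [coef_add, key, key, key, coef_add, mul_add]
      map_smul' := fun c f => eq_of_coef_eq fun k => by
        rw [RingHom.id_apply, coef_smul, key, key, coef_smul, mul_left_comm] } C ?_, key⟩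
  intro f
  refine le_of_sq_le_sq ?_ (by positivity)
  rw [mul_pow, ← (hasSum_norm_coef_sq _).tsum_eq, ← (hasSum_norm_coef_sq f).tsum_eq,
    ← tsum_mul_left]
  simp only [LinearMap.coe_mk, AddHom.coe_mk, key]
  exact (hs f).tsum_le_tsum (hle f) ((hasSum_norm_coef_sq f).summable.mul_left _)

/-- The frequency `|k|²` of a lattice vector. -/
def freqSq {n : ℕ} (k : Fin n → ℤ) : ℝ := ∑ i, (k i : ℝ) ^ 2

lemma one_le_freqSq {n : ℕ} {k : Fin n → ℤ} (hk : k ≠ 0) : 1 ≤ freqSq k := by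
  obtain ⟨i, hi⟩ := Function.ne_iff.1 hk
  have h1 : (1 : ℝ) ≤ (k i : ℝ) ^ 2 := by
    have h2 : 0 < k i ^ 2 := sq_pos_of_ne_zero hi
    exact_mod_cast h2
  exact h1.trans (Finset.single_le_sum (f := fun i => (k i : ℝ) ^ 2)
    (fun _ _ => sq_nonneg _) (Finset.mem_univ i))

/-- Fourier symbol of the inverse Laplacian on mean-zero periodic functions. -/
def symbU {n : ℕ} (k : Fin n → ℤ) : ℂ := -((4 * Real.pi ^ 2 * freqSq k : ℝ) : ℂ)⁻¹

/-- Fourier symbol of `∂ᵢ`. -/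
def symbD {n : ℕ} (i : Fin n) (k : Fin n → ℤ) : ℂ := 2 * Real.pi * I * k i

/-- Fourier symbols of the gradient and the Hessian of the inverse Laplacian. -/
def symbK {n : ℕ} : ((Fin n × Fin n) ⊕ Fin n) → (Fin n → ℤ) → ℂ
  | Sum.inl (i, j), k => symbD i k * (symbD j k * symbU k)
  | Sum.inr i, k => symbD i k * symbU k

lemma freqSq_zero {n : ℕ} : freqSq (0 : Fin n → ℤ) = 0 := by simp [freqSq]

lemma symbU_zero {n : ℕ} : symbU (0 : Fin n → ℤ) = 0 := by simp [symbU, freqSq_zero]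

lemma norm_symbD_sq {n : ℕ} (i : Fin n) (k : Fin n → ℤ) :
    ‖symbD i k‖ ^ 2 = 4 * Real.pi ^ 2 * (k i : ℝ) ^ 2 := by
  rw [symbD]
  simp only [norm_mul, Complex.norm_I, Complex.norm_real, Complex.norm_intCast, mul_pow, norm_ofNat,
    Real.norm_eq_abs, sq_abs]
  norm_num

lemma sum_symbD_sq {n : ℕ} (k : Fin n → ℤ) :
    ∑ i, symbD i k * symbD i k = -((4 * Real.pi ^ 2 * freqSq k : ℝ) : ℂ) := by
  rw [freqSq]
  push_cast
  rw [Finset.mul_sum, ← Finset.sum_neg_distrib]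
  refine Finset.sum_congr rfl fun i _ => ?_
  rw [symbD]
  linear_combination 4 * (Real.pi : ℂ) ^ 2 * (k i : ℂ) ^ 2 * Complex.I_sq

lemma sum_symbK_diag {n : ℕ} {k : Fin n → ℤ} (hk : k ≠ 0) :
    ∑ i, symbK (Sum.inl (i, i)) k = 1 := by
  have h : (4 * Real.pi ^ 2 * freqSq k : ℝ) ≠ 0 := by
    have := one_le_freqSq hk
    have := Real.pi_pos
    positivity
  have h' : ((4 * Real.pi ^ 2 * freqSq k : ℝ) : ℂ) ≠ 0 := Complex.ofReal_ne_zero.2 h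
  simp only [symbK, ← mul_assoc]
  rw [← Finset.sum_mul, sum_symbD_sq, symbU, neg_mul_neg, mul_inv_cancel₀ h']

lemma sum_norm_symbK_sq_le {n : ℕ} (k : Fin n → ℤ) :
    ∑ ι, ‖symbK ι k‖ ^ 2 ≤ 1 + 1 / (4 * Real.pi ^ 2) := by
  have hπ := Real.pi_pos
  rcases eq_or_ne k 0 with rfl | hk
  · have : ∀ ι, symbK ι (0 : Fin n → ℤ) = 0 := by
      rintro (⟨i, j⟩ | i) <;> simp [symbK, symbU_zero]
    simp only [this, norm_zero]
    simp
    positivity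
  · have hs := one_le_freqSq hk
    have hU : ‖symbU k‖ ^ 2 = ((4 * Real.pi ^ 2 * freqSq k) ^ 2)⁻¹ := by
      rw [symbU, norm_neg, norm_inv, Complex.norm_real, inv_pow, Real.norm_eq_abs, sq_abs]
    have hsum : ∑ i, ‖symbD i k‖ ^ 2 = 4 * Real.pi ^ 2 * freqSq k := by
      simp only [norm_symbD_sq, freqSq, Finset.mul_sum]
    rw [Fintype.sum_sum_type, Fintype.sum_prod_type]
    simp only [symbK, norm_mul, mul_pow]
    simp only [← Finset.mul_sum, ← Finset.sum_mul, hsum, hU]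
    have e : 4 * Real.pi ^ 2 * freqSq k * (4 * Real.pi ^ 2 * freqSq k *
        ((4 * Real.pi ^ 2 * freqSq k) ^ 2)⁻¹) + 4 * Real.pi ^ 2 * freqSq k *
        ((4 * Real.pi ^ 2 * freqSq k) ^ 2)⁻¹ = 1 + 1 / (4 * Real.pi ^ 2 * freqSq k) := by
      field_simp
    rw [e]
    exact add_le_add le_rfl
      (one_div_le_one_div_of_le (by positivity) (le_mul_of_one_le_right (by positivity) hs))

lemma norm_symbK_le {n : ℕ} (ι) (k : Fin n → ℤ) : ‖symbK ι k‖ ≤ 2 := by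
  have h1 := (Finset.single_le_sum (f := fun ι => ‖symbK ι k‖ ^ 2)
    (fun _ _ => sq_nonneg _) (Finset.mem_univ ι)).trans (sum_norm_symbK_sq_le k)
  have h2 : 1 / (4 * Real.pi ^ 2) ≤ 1 := by
    rw [div_le_one (by positivity)]
    nlinarith [Real.pi_gt_three]
  refine le_of_sq_le_sq ?_ zero_le_two
  exact (h1.trans (by linarith))

lemma norm_symbU_le {n : ℕ} (k : Fin n → ℤ) : ‖symbU k‖ ≤ 1 := by
  rcases eq_or_ne k 0 with rfl | hk
  · simp [symbU_zero]
  · have hs := one_le_freqSq hk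
    have h : 1 ≤ 4 * Real.pi ^ 2 * freqSq k := by
      nlinarith [Real.pi_gt_three, mul_self_nonneg Real.pi]
    rw [symbU, norm_neg, norm_inv, Complex.norm_real, Real.norm_of_nonneg (by linarith)]
    exact inv_le_one_of_one_le₀ h

/-- The inverse Laplacian on mean-zero periodic functions. -/
def opU (n : ℕ) : L2 n →L[ℂ] L2 n := (exists_fourierMultiplier (norm_symbU_le (n := n))).choose

lemma coef_opU {n : ℕ} (f : L2 n) (k : Fin n → ℤ) : coef (opU n f) k = symbU k * coef f k :=
  (exists_fourierMultiplier (norm_symbU_le (n := n))).choose_spec f k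

/-- The components of the gradient and the Hessian of the inverse Laplacian. -/
def opK {n : ℕ} (ι : (Fin n × Fin n) ⊕ Fin n) : L2 n →L[ℂ] L2 n :=
  (exists_fourierMultiplier (norm_symbK_le ι)).choose

lemma coef_opK {n : ℕ} (ι) (f : L2 n) (k : Fin n → ℤ) :
    coef (opK ι f) k = symbK ι k * coef f k :=
  (exists_fourierMultiplier (norm_symbK_le ι)).choose_spec f k

lemma norm_sq_eq_integral {n : ℕ} (f : L2 n) : ‖f‖ ^ 2 = ∫ x, ‖f x‖ ^ 2 ∂cellMeasure n := by
  have h := L2.inner_def (𝕜 := ℂ) f f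
  rw [inner_self_eq_norm_sq_to_K] at h
  have h2 : ((‖f‖ ^ 2 : ℝ) : ℂ) = ((∫ x, ‖f x‖ ^ 2 ∂cellMeasure n : ℝ) : ℂ) := by
    rw [← integral_complex_ofReal]
    push_cast
    refine h.trans (integral_congr_ae (Eventually.of_forall fun x => ?_))
    simp only [inner_self_eq_norm_sq_to_K]
    rfl
  exact_mod_cast h2

lemma integrable_norm_sq {n : ℕ} (f : L2 n) :
    Integrable (fun x => ‖f x‖ ^ 2) (cellMeasure n) :=
  (memLp_two_iff_integrable_sq_norm (Lp.memLp f).1).1 (Lp.memLp f)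

lemma sum_norm_opK_sq_le {n : ℕ} (f : L2 n) :
    ∑ ι, ‖opK ι f‖ ^ 2 ≤ (1 + 1 / (4 * Real.pi ^ 2)) * ‖f‖ ^ 2 := by
  have h := hasSum_sum (s := Finset.univ) fun ι (_ : ι ∈ Finset.univ) =>
    hasSum_norm_coef_sq (opK (n := n) ι f)
  refine hasSum_le (fun k => ?_) h ((hasSum_norm_coef_sq f).mul_left _)
  simp only [coef_opK, norm_mul, mul_pow, ← Finset.sum_mul]
  gcongr
  exact sum_norm_symbK_sq_le k

/-- Linear combinations of second- and first-order singular integrals with real coefficients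
whose squares sum to less than `q` have norm controlled by Parseval's identity. -/
lemma exists_combination {n : ℕ} {c : (Fin n × Fin n) ⊕ Fin n → (Fin n → ℝ) → ℝ} {q : ℝ}
    (hq : 0 ≤ q) (hcm : ∀ ι, Measurable (c ι))
    (hc : ∀ᵐ x ∂cellMeasure n, ∑ ι, c ι x ^ 2 ≤ q) :
    ∃ K : L2 n →L[ℂ] L2 n, ‖K‖ ≤ √(q * (1 + 1 / (4 * Real.pi ^ 2))) ∧
      ∀ f, K f =ᵐ[cellMeasure n] fun x => ∑ ι, (c ι x : ℂ) * opK ι f x := by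
  have hbd : ∀ ι, ∀ᵐ x ∂cellMeasure n, ‖(c ι x : ℂ)‖ ≤ √q := fun ι => by
    filter_upwards [hc] with x hx
    rw [Complex.norm_real]
    refine Real.le_sqrt_of_sq_le ?_
    rw [Real.norm_eq_abs, sq_abs]
    exact (Finset.single_le_sum (f := fun ι => c ι x ^ 2)
      (fun _ _ => sq_nonneg _) (Finset.mem_univ ι)).trans hx
  have hmem : ∀ f : L2 n, MemLp (fun x => ∑ ι, (c ι x : ℂ) * opK ι f x) 2 (cellMeasure n) :=
    fun f => memLp_finsetSum _ fun ι _ =>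
      (Lp.memLp (opK ι f)).mul' (memLp_top_of_bound
        (Complex.measurable_ofReal.comp (hcm ι)).aestronglyMeasurable _ (hbd ι))
  have hadd : ∀ f g : L2 n, (hmem (f + g)).toLp _ = (hmem f).toLp _ + (hmem g).toLp _ := by
    intro f g
    rw [← MemLp.toLp_add, MemLp.toLp_eq_toLp_iff]
    have : ∀ ι, opK ι (f + g) =ᵐ[cellMeasure n] opK ι f + opK ι g := fun ι => by
      rw [map_add]; exact Lp.coeFn_add _ _
    filter_upwards [ae_all_iff.2 this] with x hx
    simp only [hx, Pi.add_apply, mul_add, Finset.sum_add_distrib]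
  have hsmul : ∀ (a : ℂ) (f : L2 n), (hmem (a • f)).toLp _ = a • (hmem f).toLp _ := by
    intro a f
    rw [← MemLp.toLp_const_smul, MemLp.toLp_eq_toLp_iff]
    have : ∀ ι, opK ι (a • f) =ᵐ[cellMeasure n] a • opK ι f := fun ι => by
      rw [map_smul]; exact Lp.coeFn_smul _ _
    filter_upwards [ae_all_iff.2 this] with x hx
    simp only [hx, Pi.smul_apply, smul_eq_mul, Finset.mul_sum, mul_left_comm]
  have hnorm : ∀ f : L2 n, ‖(hmem f).toLp _‖ ≤ √(q * (1 + 1 / (4 * Real.pi ^ 2))) * ‖f‖ := by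
    intro f
    refine le_of_sq_le_sq ?_ (by positivity)
    rw [mul_pow, Real.sq_sqrt (by positivity), mul_assoc]
    refine le_trans ?_ (mul_le_mul_of_nonneg_left (sum_norm_opK_sq_le f) hq)
    simp only [norm_sq_eq_integral]
    rw [← integral_finsetSum _ fun ι _ => integrable_norm_sq _, ← integral_const_mul]
    refine integral_mono_ae (integrable_norm_sq _)
      ((integrable_finsetSum _ fun ι _ => integrable_norm_sq _).const_mul _) ?_
    filter_upwards [hc, (hmem f).coeFn_toLp] with x hx hx2
    rw [hx2]
    have h1 : ‖∑ ι, (c ι x : ℂ) * opK ι f x‖ ≤ ∑ ι, |c ι x| * ‖opK ι f x‖ := by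
      refine (norm_sum_le _ _).trans (le_of_eq ?_)
      simp
    calc ‖∑ ι, (c ι x : ℂ) * opK ι f x‖ ^ 2 ≤ (∑ ι, |c ι x| * ‖opK ι f x‖) ^ 2 := by gcongr
      _ ≤ (∑ ι, |c ι x| ^ 2) * ∑ ι, ‖opK ι f x‖ ^ 2 := Finset.sum_mul_sq_le_sq_mul_sq _ _ _
      _ ≤ q * ∑ ι, ‖opK ι f x‖ ^ 2 := by
        simp only [sq_abs]
        gcongr
  refine ⟨LinearMap.mkContinuous
    { toFun := fun f => (hmem f).toLp _
      map_add' := hadd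
      map_smul' := hsmul } _ hnorm, LinearMap.mkContinuous_norm_le _ (by positivity) _,
    fun f => (hmem f).coeFn_toLp⟩

/-- Coefficients of the perturbation of the identity arising from the renormalized operator. -/
def cordesCoef {n : ℕ} (A : (Fin n → ℝ) → Matrix (Fin n) (Fin n) ℝ)
    (b : (Fin n → ℝ) → Fin n → ℝ) : (Fin n × Fin n) ⊕ Fin n → (Fin n → ℝ) → ℝ
  | Sum.inl (i, j), x => gam A b x * A x i j - if i = j then 1 else 0
  | Sum.inr i, x => gam A b x * b x i

namespace SettingB

variable {n : ℕ} {A : (Fin n → ℝ) → Matrix (Fin n) (Fin n) ℝ} {b : (Fin n → ℝ) → Fin n → ℝ}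
  {lam Lam δ : ℝ}

lemma measurable_gam (hAB : SettingB A b lam Lam δ) : Measurable (gam A b) := by
  have h1 : Measurable fun x => frobSq (A x) :=
    Finset.measurable_sum _ fun i _ => Finset.measurable_sum _ fun j _ =>
      (hAB.measA i j).pow_const 2
  have h2 : Measurable fun x => euclSq (b x) :=
    Finset.measurable_sum _ fun i _ => (hAB.measb i).pow_const 2
  have h3 : Measurable fun x => (A x).trace :=
    Finset.measurable_sum _ fun i _ => hAB.measA i i
  exact h3.div (h1.add h2)

lemma measurable_cordesCoef (hAB : SettingB A b lam Lam δ) (ι) : Measurable (cordesCoef A b ι) := by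
  rcases ι with ⟨i, j⟩ | i
  · exact (hAB.measurable_gam.mul (hAB.measA i j)).sub_const _
  · exact hAB.measurable_gam.mul (hAB.measb i)

lemma lam_le_diag (hAB : SettingB A b lam Lam δ) : ∀ᵐ x, ∀ i, lam ≤ A x i i := by
  filter_upwards [hAB.ellip] with x hx i
  have := (hx (Pi.single i 1)).1
  simpa [euclSq, dotc, Pi.single_apply, Matrix.mulVec_single] using this

lemma lam_le_trace (hn : 1 ≤ n) (hAB : SettingB A b lam Lam δ) : ∀ᵐ x, lam ≤ (A x).trace := by
  filter_upwards [hAB.lam_le_diag] with x hx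
  exact (hx ⟨0, hn⟩).trans (Finset.single_le_sum (f := fun i => A x i i)
    (fun i _ => hAB.lam_pos.le.trans (hx i)) (Finset.mem_univ (⟨0, hn⟩ : Fin n)))

lemma denom_pos (hn : 1 ≤ n) (hAB : SettingB A b lam Lam δ) :
    ∀ᵐ x, 0 < frobSq (A x) + euclSq (b x) := by
  filter_upwards [hAB.lam_le_diag] with x hx
  have h1 : 0 ≤ euclSq (b x) := Finset.sum_nonneg fun _ _ => sq_nonneg _
  have h0 : 0 < A x ⟨0, hn⟩ ⟨0, hn⟩ := hAB.lam_pos.trans_le (hx _)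
  have h2 : (A x ⟨0, hn⟩ ⟨0, hn⟩) ^ 2 ≤ frobSq (A x) :=
    (Finset.single_le_sum (f := fun j => A x ⟨0, hn⟩ j ^ 2) (fun _ _ => sq_nonneg _)
      (Finset.mem_univ (⟨0, hn⟩ : Fin n))).trans
    (Finset.single_le_sum (f := fun i => ∑ j, A x i j ^ 2)
      (fun _ _ => Finset.sum_nonneg fun _ _ => sq_nonneg _) (Finset.mem_univ (⟨0, hn⟩ : Fin n)))
  have := pow_pos h0 2
  linarith

lemma gam_pos (hn : 1 ≤ n) (hAB : SettingB A b lam Lam δ) : ∀ᵐ x, 0 < gam A b x := by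
  filter_upwards [hAB.lam_le_trace hn, hAB.denom_pos hn] with x h1 h2
  exact div_pos (hAB.lam_pos.trans_le h1) h2

lemma exists_inv_gam_le (hn : 1 ≤ n) (hAB : SettingB A b lam Lam δ) :
    ∃ C, ∀ᵐ x, ‖(gam A b x)⁻¹‖ ≤ C := by
  obtain ⟨C₁, h₁⟩ := hAB.bddA
  obtain ⟨C₂, h₂⟩ := hAB.bddb
  refine ⟨(C₁ + C₂) / lam, ?_⟩
  filter_upwards [h₁, h₂, hAB.lam_le_trace hn, hAB.denom_pos hn, hAB.gam_pos hn]
    with x h₁ h₂ h₃ h₄ h₅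
  rw [Real.norm_of_nonneg (inv_nonneg.2 h₅.le), gam, inv_div]
  have := hAB.lam_pos
  gcongr
  linarith

lemma sum_cordesCoef_sq (x : Fin n → ℝ) : ∑ ι, cordesCoef A b ι x ^ 2 =
    gam A b x ^ 2 * (frobSq (A x) + euclSq (b x)) - 2 * gam A b x * (A x).trace + n := by
  rw [Fintype.sum_sum_type, Fintype.sum_prod_type]
  simp only [cordesCoef, sub_sq, mul_pow, Finset.sum_add_distrib, Finset.sum_sub_distrib,
    ← Finset.mul_sum, frobSq, euclSq, Matrix.trace, Matrix.diag_apply]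
  simp [Finset.mul_sum]
  ring_nf
  simp [Finset.mul_sum, mul_assoc, mul_left_comm]
  ring

lemma delta_pos (hAB : SettingB A b lam Lam δ) : 0 < δ :=
  lt_of_le_of_lt (by positivity) hAB.delta_mem.1

lemma sum_cordesCoef_sq_le (hn : 1 ≤ n) (hAB : SettingB A b lam Lam δ) :
    ∀ᵐ x, ∑ ι, cordesCoef A b ι x ^ 2 ≤ 1 - δ := by
  filter_upwards [hAB.cordes, hAB.lam_le_trace hn, hAB.denom_pos hn] with x h₁ h₂ h₃
  have ht : 0 < (A x).trace := hAB.lam_pos.trans_le h₂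
  have hn' : (1 : ℝ) ≤ n := by exact_mod_cast hn
  have hδ : 0 < (n : ℝ) - 1 + δ := by linarith [hAB.delta_pos]
  rw [sum_cordesCoef_sq]
  rw [div_le_div_iff₀ (by positivity) hδ] at h₁
  have h4 : (n : ℝ) - 1 + δ ≤ (A x).trace ^ 2 / (frobSq (A x) + euclSq (b x)) := by
    rw [le_div_iff₀ h₃]; linarith
  have h5 : gam A b x ^ 2 * (frobSq (A x) + euclSq (b x)) - 2 * gam A b x * (A x).trace =
      -((A x).trace ^ 2 / (frobSq (A x) + euclSq (b x))) := by
    rw [gam]; field_simp; ring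
  linarith

lemma contraction_const_lt_one (hn : 1 ≤ n) (hAB : SettingB A b lam Lam δ) :
    √((1 - δ) * (1 + 1 / (4 * Real.pi ^ 2))) < 1 := by
  have hn' : (1 : ℝ) ≤ n := by exact_mod_cast hn
  have hπ := Real.pi_gt_three
  rw [Real.sqrt_lt' one_pos, one_pow]
  have h1 := hAB.delta_mem.1
  have h2 : (1 : ℝ) / (1 + Real.pi ^ 2) ≤ n / (n + Real.pi ^ 2) := by
    rw [div_le_div_iff₀ (by positivity) (by positivity)]
    nlinarith [sq_nonneg Real.pi]
  have h3 : 1 - δ < 1 - 1 / (1 + Real.pi ^ 2) := by linarith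
  calc (1 - δ) * (1 + 1 / (4 * Real.pi ^ 2))
      < (1 - 1 / (1 + Real.pi ^ 2)) * (1 + 1 / (4 * Real.pi ^ 2)) := by gcongr
    _ = (4 * Real.pi ^ 2 + 1) / (4 * Real.pi ^ 2 + 4) := by
      field_simp
      ring
    _ < 1 := by rw [div_lt_one (by positivity)]; linarith

end SettingB

/-- The Fourier symbol of `A : D² + b · ∇` with coefficients frozen at `x`. -/
def opSymb {n : ℕ} (A : (Fin n → ℝ) → Matrix (Fin n) (Fin n) ℝ) (b : (Fin n → ℝ) → Fin n → ℝ)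
    (k : Fin n → ℤ) (x : Fin n → ℝ) : ℂ :=
  (∑ i, ∑ j, (A x i j : ℂ) * (symbD i k * symbD j k)) + ∑ i, (b x i : ℂ) * symbD i k

lemma pd_re_mul_expo {n : ℕ} (c : ℂ) (k : Fin n → ℤ) (i : Fin n) :
    pd (fun x => (c * expo k x).re) i = fun x => (symbD i k * c * expo k x).re := by
  funext x
  have h := Complex.reCLM.hasFDerivAt.comp x
    ((differentiable_expo k x).hasFDerivAt.const_mul c)
  have e : HasFDerivAt (fun x => (c * expo k x).re) _ x := h
  rw [pd, e.fderiv]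
  simp only [ContinuousLinearMap.comp_apply, _root_.smul_apply, Complex.reCLM_apply,
    fderiv_expo, smul_eq_mul, symbD]
  congr 1
  ring

lemma IsInvariantMeasure.integral_re {n : ℕ} {A : (Fin n → ℝ) → Matrix (Fin n) (Fin n) ℝ}
    {b : (Fin n → ℝ) → Fin n → ℝ} {r : (Fin n → ℝ) → ℝ} (hr : IsInvariantMeasure A b r)
    (k : Fin n → ℤ) (c : ℂ) :
    ∫ x, (c * ((r x : ℂ) * (opSymb A b k x * expo k x))).re ∂cellMeasure n = 0 := by
  have hsm : ContDiff ℝ 2 fun x : Fin n → ℝ => (c * expo k x).re :=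
    Complex.reCLM.contDiff.comp (contDiff_const.mul (contDiff_expo k))
  have hper : IsPeriodic fun x : Fin n → ℝ => (c * expo k x).re := fun x m => by
    simp only [expo_periodic k x m]
  refine (integral_congr_ae (Eventually.of_forall fun x => ?_)).trans (hr.2.2.2.2 _ hsm hper)
  simp only [frobInner, dotc, hess, grad, Matrix.of_apply, pd_re_mul_expo, opSymb]
  simp only [← Complex.re_ofReal_mul, ← Complex.re_sum, ← Complex.add_re]
  congr 1
  simp only [add_mul, Finset.sum_mul, mul_add, Finset.mul_sum]
  congr 1
  · refine Finset.sum_congr rfl fun i _ => Finset.sum_congr rfl fun j _ => ?_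
    ring
  · refine Finset.sum_congr rfl fun i _ => ?_
    ring

lemma IsInvariantMeasure.integral_eq_zero {n : ℕ} {A : (Fin n → ℝ) → Matrix (Fin n) (Fin n) ℝ}
    {b : (Fin n → ℝ) → Fin n → ℝ} {r : (Fin n → ℝ) → ℝ} (hr : IsInvariantMeasure A b r)
    (k : Fin n → ℤ) :
    ∫ x, (r x : ℂ) * (opSymb A b k x * expo k x) ∂cellMeasure n = 0 := by
  by_cases hi : Integrable (fun x => (r x : ℂ) * (opSymb A b k x * expo k x)) (cellMeasure n)
  · have key : ∀ c : ℂ,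
        (c * ∫ x, (r x : ℂ) * (opSymb A b k x * expo k x) ∂cellMeasure n).re = 0 := fun c => by
      rw [← integral_const_mul, ← hr.integral_re k c]
      exact (Complex.reCLM.integral_comp_comm (hi.const_mul c)).symm
    refine Complex.ext (by simpa using key 1) (by simpa using key (-I))
  · exact integral_undef hi

/-- The operator `A : D² + b · ∇` applied to the inverse Laplacian of `f`. -/
def opL {n : ℕ} (A : (Fin n → ℝ) → Matrix (Fin n) (Fin n) ℝ) (b : (Fin n → ℝ) → Fin n → ℝ)
    (f : L2 n) (x : Fin n → ℝ) : ℂ :=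
  (∑ i, ∑ j, (A x i j : ℂ) * opK (Sum.inl (i, j)) f x) + ∑ i, (b x i : ℂ) * opK (Sum.inr i) f x

lemma coef_expoLp {n : ℕ} (k l : Fin n → ℤ) :
    coef (expoLp k : L2 n) l = if l = k then 1 else 0 := by
  rw [← inner_expoLp]
  exact orthonormal_iff_ite.1 (orthonormal_expoLp n) l k

lemma opK_expoLp {n : ℕ} (ι) (k : Fin n → ℤ) : opK ι (expoLp k) = symbK ι k • expoLp k := by
  refine eq_of_coef_eq fun l => ?_
  rw [coef_opK, coef_smul, coef_expoLp]
  split_ifs with h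
  · rw [h]
  · simp

lemma coeFn_expoLp {n : ℕ} (k : Fin n → ℤ) : (expoLp k : L2 n) =ᵐ[cellMeasure n] expo k :=
  MemLp.coeFn_toLp _

lemma opL_expoLp {n : ℕ} (A : (Fin n → ℝ) → Matrix (Fin n) (Fin n) ℝ)
    (b : (Fin n → ℝ) → Fin n → ℝ) (k : Fin n → ℤ) :
    opL A b (expoLp k) =ᵐ[cellMeasure n] fun x => symbU k * (opSymb A b k x * expo k x) := by
  have h : ∀ ι, opK ι (expoLp k) =ᵐ[cellMeasure n] fun x => symbK ι k * expo k x := fun ι => by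
    rw [opK_expoLp]
    filter_upwards [Lp.coeFn_smul (symbK ι k) (expoLp k : L2 n), coeFn_expoLp k] with x h1 h2
    rw [h1, Pi.smul_apply, h2, smul_eq_mul]
  filter_upwards [ae_all_iff.2 h] with x hx
  simp only [opL, hx, symbK, opSymb, add_mul, mul_add, Finset.sum_mul, Finset.mul_sum]
  congr 1
  · refine Finset.sum_congr rfl fun i _ => Finset.sum_congr rfl fun j _ => ?_
    ring
  · refine Finset.sum_congr rfl fun i _ => ?_
    ring

lemma sum_opK_diag {n : ℕ} {f : L2 n} (hf : coef f 0 = 0) :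
    ∑ i, opK (Sum.inl (i, i)) f = f := by
  refine eq_of_coef_eq fun k => ?_
  rw [← inner_expoLp, inner_sum]
  simp only [inner_expoLp, coef_opK]
  rw [← Finset.sum_mul]
  rcases eq_or_ne k 0 with rfl | hk
  · rw [hf, mul_zero]
  · rw [sum_symbK_diag hk, one_mul]

namespace SettingB

variable {n : ℕ} {A : (Fin n → ℝ) → Matrix (Fin n) (Fin n) ℝ} {b : (Fin n → ℝ) → Fin n → ℝ}
  {lam Lam δ : ℝ}

/-- The contraction `K` with `f + K f = γ (A : D² + b · ∇) Δ⁻¹ f` for mean-zero `f`. -/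
lemma exists_contraction (hn : 1 ≤ n) (hAB : SettingB A b lam Lam δ) :
    ∃ K : L2 n →L[ℂ] L2 n, ‖K‖ < 1 ∧ ∀ f,
      (∑ i, opK (Sum.inl (i, i)) f + K f : L2 n) =ᵐ[cellMeasure n]
        fun x => (gam A b x : ℂ) * opL A b f x := by
  obtain ⟨K, hK, hKf⟩ := exists_combination (sub_nonneg.2 hAB.delta_mem.2)
    hAB.measurable_cordesCoef (ae_restrict_of_ae (hAB.sum_cordesCoef_sq_le hn))
  refine ⟨K, hK.trans_lt (hAB.contraction_const_lt_one hn), fun f => ?_⟩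
  have hsum : ⇑(∑ i, opK (Sum.inl (i, i)) f : L2 n) =ᵐ[cellMeasure n]
      fun x => ∑ i, opK (Sum.inl (i, i)) f x := by
    have := Lp.coeFn_finsetSum (Finset.univ : Finset (Fin n)) fun i => opK (Sum.inl (i, i)) f
    filter_upwards [this] with x hx
    rw [hx, Finset.sum_apply]
  filter_upwards [hsum, hKf f, Lp.coeFn_add (∑ i, opK (Sum.inl (i, i)) f) (K f)] with x h1 h2 h3
  rw [h3, Pi.add_apply, h1, h2, Fintype.sum_sum_type, Fintype.sum_prod_type]
  simp only [cordesCoef, opL, Complex.ofReal_sub, Complex.ofReal_mul, sub_mul,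
    Finset.sum_sub_distrib, mul_add, Finset.mul_sum, mul_assoc]
  have hd : ∑ i, ∑ j, ((if i = j then 1 else 0 : ℝ) : ℂ) * opK (Sum.inl (i, j)) f x =
      ∑ i, opK (Sum.inl (i, i)) f x := by
    refine Finset.sum_congr rfl fun i _ => ?_
    rw [Finset.sum_eq_single i (fun j _ hj => by simp [hj.symm]) (by simp)]
    simp
  linear_combination -hd

lemma exists_solvability (hn : 1 ≤ n) (hAB : SettingB A b lam Lam δ) {r : (Fin n → ℝ) → ℝ}
    (hr : IsInvariantMeasure A b r) (hcenter : ∀ i, (∫ x in unitCell n, r x * b x i) = 0)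
    (j : Fin n) : ∃ f : L2 n, coef f 0 = 0 ∧ opL A b f =ᵐ[cellMeasure n] fun x => -(b x j : ℂ) := by
  obtain ⟨K, hK, hKf⟩ := hAB.exists_contraction hn
  obtain ⟨C, hC⟩ := hAB.exists_inv_gam_le hn
  have hγ : ∀ᵐ x ∂cellMeasure n, 0 < gam A b x := ae_restrict_of_ae (hAB.gam_pos hn)
  have hrL : MemLp r 2 (cellMeasure n) :=
    (memLp_two_iff_integrable_sq hr.1.aestronglyMeasurable).2 hr.2.2.1
  have hρm : MemLp (fun x => (((gam A b x)⁻¹ * r x : ℝ) : ℂ)) 2 (cellMeasure n) :=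
    (hrL.mul' (memLp_top_of_bound hAB.measurable_gam.inv.aestronglyMeasurable C
      (ae_restrict_of_ae hC))).ofReal
  have hhm : MemLp (fun x => ((-cordesCoef A b (Sum.inr j) x : ℝ) : ℂ)) 2 (cellMeasure n) := by
    refine MemLp.ofReal (MemLp.neg (MemLp.of_bound
      (hAB.measurable_cordesCoef _).aestronglyMeasurable 1 ?_))
    filter_upwards [ae_restrict_of_ae (hAB.sum_cordesCoef_sq_le hn)] with x hx
    have h1 := (Finset.single_le_sum (f := fun ι => cordesCoef A b ι x ^ 2)
      (fun _ _ => sq_nonneg _) (Finset.mem_univ (Sum.inr j))).trans hx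
    rw [Real.norm_eq_abs]
    exact abs_le_one_iff_mul_self_le_one.2 (by
      rw [← sq]; exact h1.trans (by linarith [hAB.delta_pos]))
  set ρ : L2 n := hρm.toLp _ with hρ
  have hρc : ρ =ᵐ[cellMeasure n] fun x => (((gam A b x)⁻¹ * r x : ℝ) : ℂ) := hρm.coeFn_toLp
  have hinner : ∀ (g : L2 n) (G : (Fin n → ℝ) → ℂ),
      g =ᵐ[cellMeasure n] (fun x => (gam A b x : ℂ) * G x) →
      ⟪ρ, g⟫_ℂ = ∫ x, (r x : ℂ) * G x ∂cellMeasure n := by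
    intro g G hg
    rw [L2.inner_def]
    refine integral_congr_ae ?_
    filter_upwards [hg, hρc, hγ] with x h1 h2 h3
    have h3' : (gam A b x : ℂ) ≠ 0 := Complex.ofReal_ne_zero.2 h3.ne'
    rw [h1, h2, RCLike.inner_apply, Complex.conj_ofReal]
    push_cast
    field_simp
  have hρ0 : ρ ≠ 0 := by
    intro h0
    have h1 : ∀ᵐ x ∂cellMeasure n, r x = 0 := by
      have h2 : ρ =ᵐ[cellMeasure n] 0 := by rw [h0]; exact Lp.coeFn_zero _ _ _
      filter_upwards [h2, hρc, hγ] with x h2 h3 h4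
      rw [h3] at h2
      have h5 : (gam A b x)⁻¹ * r x = 0 := Complex.ofReal_eq_zero.1 h2
      exact (mul_eq_zero.1 h5).resolve_left (inv_ne_zero h4.ne')
    have h2 := hr.2.2.2.1
    rw [integral_eq_zero_of_ae h1] at h2
    exact zero_ne_one h2
  set T : L2 n →L[ℂ] L2 n := ∑ i, opK (Sum.inl (i, i)) + K with hT
  have hTf : ∀ f, T f = ∑ i, opK (Sum.inl (i, i)) f + K f := fun f => by
    rw [hT, add_apply, _root_.sum_apply]
  have hann : ∀ f, ⟪ρ, T f⟫_ℂ = 0 := by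
    have : (innerSL ℂ ρ).comp T = 0 := by
      refine ContinuousLinearMap.ext_on
        (Submodule.dense_iff_topologicalClosure_eq_top.2 (fourierCellBasis n).dense_span) ?_
      rintro _ ⟨k, rfl⟩
      have h1 := hKf (expoLp k)
      rw [coe_fourierCellBasis, ContinuousLinearMap.comp_apply, innerSL_apply_apply, hTf]
      refine (hinner _ (fun x => symbU k * (opSymb A b k x * expo k x)) ?_).trans ?_
      · filter_upwards [h1, opL_expoLp A b k] with x h1 h2
        rw [h1, h2]
      · simp only [mul_left_comm _ (symbU k)]
        rw [integral_const_mul, hr.integral_eq_zero k, mul_zero]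
        rfl
    intro f
    exact DFunLike.congr_fun this f
  obtain ⟨f, hf0, hf⟩ := exists_orthogonal_add_map_eq (e := expoLp 0) (h := hhm.toLp _) hK hρ0
    (fun f hf => by
      rw [inner_expoLp] at hf
      have := hann f
      rwa [hTf, sum_opK_diag hf] at this) (by
      rw [hinner _ (fun x => ((-b x j : ℝ) : ℂ))]
      · simp only [← Complex.ofReal_mul]
        rw [integral_complex_ofReal]
        simp only [mul_neg, integral_neg]
        rw [hcenter j]
        simp
      · filter_upwards [hhm.coeFn_toLp] with x hx
        rw [hx, cordesCoef]
        push_cast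
        ring)
  rw [inner_expoLp] at hf0
  refine ⟨f, hf0, ?_⟩
  have h1 := hKf f
  rw [sum_opK_diag hf0, hf] at h1
  filter_upwards [h1, hhm.coeFn_toLp, hγ] with x h1 h2 h3
  have h3' : (gam A b x : ℂ) ≠ 0 := Complex.ofReal_ne_zero.2 h3.ne'
  refine mul_left_cancel₀ h3' ?_
  rw [← h1, h2, cordesCoef]
  push_cast
  ring

lemma eq_of_opL_ae_eq (hn : 1 ≤ n) (hAB : SettingB A b lam Lam δ) {f g : L2 n}
    (hf : coef f 0 = 0) (hg : coef g 0 = 0) (h : opL A b f =ᵐ[cellMeasure n] opL A b g) :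
    f = g := by
  obtain ⟨K, hK, hKf⟩ := hAB.exists_contraction hn
  refine eq_of_add_map_eq hK (Lp.ext ?_)
  have h1 := hKf f
  have h2 := hKf g
  rw [sum_opK_diag hf] at h1
  rw [sum_opK_diag hg] at h2
  filter_upwards [h, h1, h2] with x h h1 h2
  rw [h1, h2, h]

end SettingB

lemma HasWeakPd.integral_re {n : ℕ} {i : Fin n} {w v : (Fin n → ℝ) → ℂ} (h : HasWeakPd i w v)
    (hwp : IsPeriodic w) (hvp : IsPeriodic v) (hw : Integrable w (cellMeasure n))
    (hv : Integrable v (cellMeasure n)) {φ : (Fin n → ℝ) → ℝ} (hφ : ContDiff ℝ (⊤ : ℕ∞) φ)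
    (hφc : HasCompactSupport φ) :
    ∫ x, (w x).re * pd φ i x = -∫ x, (v x).re * φ x := by
  have h1 := congrArg Complex.re (h φ hφ hφc)
  rw [Complex.neg_re] at h1
  have e1 : ∫ x, (w x).re * pd φ i x = (∫ x, w x * (pd φ i x : ℂ)).re := by
    simp only [← Complex.re_mul_ofReal]
    exact Complex.reCLM.integral_comp_comm (integrable_mul_of_isPeriodic hwp hw
      (continuous_pd (hφ.of_le (by simp)) i) (hasCompactSupport_pd hφc i))
  have e2 : ∫ x, (v x).re * φ x = (∫ x, v x * (φ x : ℂ)).re := by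
    simp only [← Complex.re_mul_ofReal]
    exact Complex.reCLM.integral_comp_comm (integrable_mul_of_isPeriodic hvp hv hφ.continuous hφc)
  rw [e1, e2, h1]

/-- The periodic extension of an element of `L²` of the cell. -/
def perExt {n : ℕ} (F : L2 n) (x : Fin n → ℝ) : ℂ := F (fractVec x)

lemma isPeriodic_perExt {n : ℕ} (F : L2 n) : IsPeriodic (perExt F) := isPeriodic_comp_fractVec _

lemma perExt_ae_eq {n : ℕ} (F : L2 n) : perExt F =ᵐ[cellMeasure n] F := comp_fractVec_ae_eq _

lemma measurable_perExt {n : ℕ} (F : L2 n) : Measurable (perExt F) :=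
  (Lp.stronglyMeasurable F).measurable.comp measurable_fractVec

lemma memLp_perExt {n : ℕ} (F : L2 n) : MemLp (perExt F) 2 (cellMeasure n) :=
  (Lp.memLp F).ae_eq (perExt_ae_eq F).symm

lemma integrable_perExt {n : ℕ} (F : L2 n) : Integrable (perExt F) (cellMeasure n) :=
  (memLp_perExt F).integrable one_le_two

lemma integrable_re_perExt_sq {n : ℕ} (F : L2 n) :
    Integrable (fun x => (perExt F x).re ^ 2) (cellMeasure n) :=
  (memLp_two_iff_integrable_sq
    (Complex.measurable_re.comp (measurable_perExt F)).aestronglyMeasurable).1 (memLp_perExt F).re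

lemma hasWeakPd_perExt {n : ℕ} {i : Fin n} {F G : L2 n}
    (h : ∀ k, coef G k = symbD i k * coef F k) : HasWeakPd i (perExt F) (perExt G) :=
  hasWeakPd_of_coef i (isPeriodic_perExt F) (isPeriodic_perExt G) (memLp_perExt F)
    (memLp_perExt G) fun k => by
      rw [coef_congr (perExt_ae_eq G), coef_congr (perExt_ae_eq F), h, symbD]

lemma integral_re_perExt {n : ℕ} {i : Fin n} {F G : L2 n}
    (h : ∀ k, coef G k = symbD i k * coef F k) {φ : (Fin n → ℝ) → ℝ}
    (hφ : ContDiff ℝ (⊤ : ℕ∞) φ) (hφc : HasCompactSupport φ) :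
    ∫ x, (perExt F x).re * pd φ i x = -∫ x, (perExt G x).re * φ x :=
  (hasWeakPd_perExt h).integral_re (isPeriodic_perExt F) (isPeriodic_perExt G)
    (integrable_perExt F) (integrable_perExt G) hφ hφc

lemma opK_inl_comm {n : ℕ} (i j : Fin n) (f : L2 n) :
    opK (Sum.inl (i, j)) f = opK (Sum.inl (j, i)) f :=
  eq_of_coef_eq fun k => by simp only [coef_opK, symbK, mul_left_comm]

lemma coef_opK_inr {n : ℕ} (i : Fin n) (f : L2 n) (k : Fin n → ℤ) :
    coef (opK (Sum.inr i) f) k = symbD i k * coef (opU n f) k := by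
  rw [coef_opK, coef_opU, symbK, mul_assoc]

lemma coef_opK_inl {n : ℕ} (i j : Fin n) (f : L2 n) (k : Fin n → ℤ) :
    coef (opK (Sum.inl (i, j)) f) k = symbD i k * coef (opK (Sum.inr j) f) k := by
  rw [coef_opK, coef_opK, symbK, symbK, mul_assoc]

lemma coef_zero_eq_integral {n : ℕ} (w : (Fin n → ℝ) → ℂ) :
    coef w 0 = ∫ x, w x ∂cellMeasure n := by
  simp [coef, expo]

lemma re_opL {n : ℕ} (A : (Fin n → ℝ) → Matrix (Fin n) (Fin n) ℝ)
    (b : (Fin n → ℝ) → Fin n → ℝ) (f : L2 n) (x : Fin n → ℝ) :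
    (opL A b f x).re = (∑ i, ∑ j, A x i j * (opK (Sum.inl (i, j)) f x).re) +
      ∑ i, b x i * (opK (Sum.inr i) f x).re := by
  simp only [opL, Complex.add_re, Complex.re_sum, Complex.re_ofReal_mul]

/-- The real part of the inverse Laplacian of a solution of the renormalized problem is a
corrector. -/
lemma isCorrector_re_perExt {n : ℕ} {A : (Fin n → ℝ) → Matrix (Fin n) (Fin n) ℝ}
    {b : (Fin n → ℝ) → Fin n → ℝ} (hA : IsPeriodic A) (hb : IsPeriodic b) {j : Fin n} {f : L2 n}
    (hf : opL A b f =ᵐ[cellMeasure n] fun x => -(b x j : ℂ)) :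
    IsCorrector A b j fun x => (perExt (opU n f) x).re := by
  have hper : ∀ (F : L2 n) x (k : Fin n → ℤ),
      (perExt F (x + fun i => (k i : ℝ))).re = (perExt F x).re := fun F x k => by
    rw [isPeriodic_perExt F x k]
  have hmeas : ∀ F : L2 n, Measurable fun x => (perExt F x).re := fun F =>
    Complex.measurable_re.comp (measurable_perExt F)
  refine ⟨hmeas _, hper _, integrable_re_perExt_sq _, ?_,
    fun x i => (perExt (opK (Sum.inr i) f) x).re,
    fun x => Matrix.of fun i k => (perExt (opK (Sum.inl (i, k)) f) x).re,
    fun i => hmeas _, fun i k => hmeas _, fun x k => ?_, fun x k => ?_,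
    fun i => integrable_re_perExt_sq _, fun i k => integrable_re_perExt_sq _,
    Eventually.of_forall fun x => ?_, fun φ hφ hφc => ⟨fun i => ?_, fun i k => ?_⟩, ?_⟩
  · have h0 : ∫ x, perExt (opU n f) x ∂cellMeasure n = 0 := by
      rw [← coef_zero_eq_integral, coef_congr (perExt_ae_eq _), coef_opU, symbU_zero, zero_mul]
    have h1 := Complex.reCLM.integral_comp_comm (integrable_perExt (opU n f))
    rw [h0, map_zero] at h1
    exact h1
  · funext i
    exact hper _ x k
  · ext i l
    exact hper _ x k
  · ext i l
    simp only [Matrix.transpose_apply, Matrix.of_apply]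
    rw [opK_inl_comm]
  · exact integral_re_perExt (coef_opK_inr i f) hφ hφc
  · rw [integral_re_perExt (coef_opK_inr i f) (contDiff_pd hφ k) (hasCompactSupport_pd hφc k),
      integral_re_perExt (coef_opK_inl k i f) hφ hφc, neg_neg]
    simp only [Matrix.of_apply]
    rw [opK_inl_comm]
  · refine ae_of_ae_cell (fun x k hx => ?_) ?_
    · simpa only [hA x k, hb x k, frobInner, dotc, Matrix.of_apply, hper] using hx
    · have h1 : ∀ ι, perExt (opK ι f) =ᵐ[cellMeasure n] opK ι f := fun ι => perExt_ae_eq _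
      filter_upwards [hf, ae_all_iff.2 h1] with x hx h1
      have h2 := congrArg Complex.re hx
      rw [re_opL, Complex.neg_re, Complex.ofReal_re] at h2
      simp only [frobInner, dotc, Matrix.of_apply, h1]
      linarith

lemma ae_eq_of_coef_eq {n : ℕ} {w : (Fin n → ℝ) → ℂ} (hw : MemLp w 2 (cellMeasure n)) {F : L2 n}
    (h : ∀ k, coef w k = coef F k) : w =ᵐ[cellMeasure n] F := by
  have : hw.toLp w = F := eq_of_coef_eq fun k => by rw [coef_congr hw.coeFn_toLp, h]
  rw [← this]
  exact hw.coeFn_toLp.symm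

lemma hasWeakPd_ofReal {n : ℕ} {i : Fin n} {w v : (Fin n → ℝ) → ℝ}
    (h : ∀ φ : (Fin n → ℝ) → ℝ, ContDiff ℝ (⊤ : ℕ∞) φ → HasCompactSupport φ →
      ∫ x, w x * pd φ i x = -∫ x, v x * φ x) :
    HasWeakPd i (fun x => (w x : ℂ)) fun x => (v x : ℂ) := fun φ hφ hφc => by
  simp only [← Complex.ofReal_mul]
  rw [integral_complex_ofReal, integral_complex_ofReal, h φ hφ hφc, Complex.ofReal_neg]

lemma IsPeriodic.ofReal {n : ℕ} {w : (Fin n → ℝ) → ℝ} (h : IsPeriodic w) :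
    IsPeriodic fun x => (w x : ℂ) := fun x k => congrArg Complex.ofReal (h x k)

/-- Every corrector is the inverse Laplacian of a solution of the renormalized problem. -/
lemma IsCorrector.exists_opL {n : ℕ} {A : (Fin n → ℝ) → Matrix (Fin n) (Fin n) ℝ}
    {b : (Fin n → ℝ) → Fin n → ℝ} {j : Fin n} {χ : (Fin n → ℝ) → ℝ} (h : IsCorrector A b j χ) :
    ∃ f : L2 n, coef f 0 = 0 ∧ opL A b f =ᵐ[cellMeasure n] (fun x => -(b x j : ℂ)) ∧
      (fun x => (χ x : ℂ)) =ᵐ[cellMeasure n] opU n f := by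
  obtain ⟨hχm, hχp, hχ2, hχ0, g, H, hgm, hHm, hgp, hHp, hg2, hH2, hHs, hweak, hpde⟩ := h
  have lift : ∀ {w : (Fin n → ℝ) → ℝ}, Measurable w → IntegrableOn (fun x => w x ^ 2) (unitCell n) →
      MemLp (fun x => (w x : ℂ)) 2 (cellMeasure n) := fun hm h2 =>
    ((memLp_two_iff_integrable_sq hm.aestronglyMeasurable).2 h2).ofReal
  have hχL := lift hχm hχ2
  have hgL := fun i => lift (hgm i) (hg2 i)
  have hHL := fun i k => lift (hHm i k) (hH2 i k)
  have hgp' : ∀ i, IsPeriodic fun x => g x i := fun i x k => congrFun (hgp x k) i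
  have hHp' : ∀ i k, IsPeriodic fun x => H x i k := fun i k x m =>
    congrFun (congrFun (hHp x m) i) k
  have hg : ∀ i l, coef (fun x => (g x i : ℂ)) l = symbD i l * coef (fun x => (χ x : ℂ)) l :=
    fun i l => (hasWeakPd_ofReal fun φ hφ hφc => (hweak φ hφ hφc).1 i).coef_eq hχp.ofReal
      (hgp' i).ofReal (hχL.integrable one_le_two) ((hgL i).integrable one_le_two) l
  have hH : ∀ i k l, coef (fun x => (H x i k : ℂ)) l =
      symbD k l * (symbD i l * coef (fun x => (χ x : ℂ)) l) := fun i k l => by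
    rw [← hg]
    refine (hasWeakPd_ofReal fun φ hφ hφc => ?_).coef_eq (hgp' i).ofReal
      (hHp' i k).ofReal ((hgL i).integrable one_le_two) ((hHL i k).integrable one_le_two) l
    have h1 := (hweak _ (contDiff_pd hφ k) (hasCompactSupport_pd hφc k)).1 i
    rw [(hweak φ hφ hφc).2 i k] at h1
    rw [h1, neg_neg]
  have hfL : MemLp (fun x => ∑ i, (H x i i : ℂ)) 2 (cellMeasure n) :=
    memLp_finsetSum _ fun i _ => hHL i i
  set f : L2 n := hfL.toLp _ with hf
  have hfsum : f = ∑ i, (hHL i i).toLp _ := by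
    rw [hf]
    refine Lp.ext ?_
    have h1 := Lp.coeFn_finsetSum (Finset.univ : Finset (Fin n)) fun i => (hHL i i).toLp _
    filter_upwards [h1, hfL.coeFn_toLp, ae_all_iff.2 fun i => (hHL i i).coeFn_toLp]
      with x h1 h2 h3
    rw [h1, h2, Finset.sum_apply]
    exact Finset.sum_congr rfl fun i _ => (h3 i).symm
  have hfc : ∀ l, coef f l =
      -((4 * Real.pi ^ 2 * freqSq l : ℝ) : ℂ) * coef (fun x => (χ x : ℂ)) l := fun l => by
    rw [← sum_symbD_sq, hfsum, ← inner_expoLp, inner_sum, Finset.sum_mul]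
    refine Finset.sum_congr rfl fun i _ => ?_
    rw [inner_expoLp, coef_congr (hHL i i).coeFn_toLp, hH, mul_assoc]
  have hχ0' : coef (fun x => (χ x : ℂ)) 0 = 0 := by
    rw [coef_zero_eq_integral, integral_complex_ofReal, hχ0, Complex.ofReal_zero]
  have hχc : ∀ l, coef (fun x => (χ x : ℂ)) l = symbU l * coef f l := fun l => by
    rcases eq_or_ne l 0 with rfl | hl
    · rw [hχ0', symbU_zero, zero_mul]
    · have h1 : (4 * Real.pi ^ 2 * freqSq l : ℝ) ≠ 0 := by
        have := one_le_freqSq hl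
        positivity
      rw [hfc, symbU, ← mul_assoc, neg_mul_neg, inv_mul_cancel₀ (Complex.ofReal_ne_zero.2 h1),
        one_mul]
  have hge : ∀ i, (fun x => (g x i : ℂ)) =ᵐ[cellMeasure n] opK (Sum.inr i) f := fun i =>
    ae_eq_of_coef_eq (hgL i) fun l => by rw [hg, hχc, coef_opK, symbK, mul_assoc]
  have hHe : ∀ i k, (fun x => (H x i k : ℂ)) =ᵐ[cellMeasure n] opK (Sum.inl (i, k)) f := fun i k =>
    ae_eq_of_coef_eq (hHL i k) fun l => by
      rw [hH, hχc, coef_opK, symbK]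
      ring
  refine ⟨f, ?_, ?_, ae_eq_of_coef_eq hχL fun l => by rw [hχc, coef_opU]⟩
  · rw [hfc, hχ0', mul_zero]
  · filter_upwards [ae_all_iff.2 hge, ae_all_iff.2 fun i => ae_all_iff.2 (hHe i),
      ae_restrict_of_ae hpde] with x h1 h2 h3
    simp only [opL, ← h1, ← h2]
    rw [← h3]
    simp only [frobInner, dotc]
    push_cast
    ring

/-- In Setting B, under the centering condition `∫_Y r b = 0` (with `r`
the invariant measure), for each `j` the cell problem `-A:D²χ - b·∇χ = b_j` has a
solution `χ ∈ H²_per(Y)` with zero mean, unique up to equality a.e. -/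
theorem stmt_3 {n : ℕ} (hn : 1 ≤ n)
    (A : (Fin n → ℝ) → Matrix (Fin n) (Fin n) ℝ) (b : (Fin n → ℝ) → Fin n → ℝ)
    (lam Lam δ : ℝ) (hAB : SettingB A b lam Lam δ)
    (r : (Fin n → ℝ) → ℝ) (hr : IsInvariantMeasure A b r)
    (hcenter : ∀ i, (∫ x in unitCell n, r x * b x i) = 0) :
    ∀ j : Fin n, ∃ χ : (Fin n → ℝ) → ℝ, IsCorrector A b j χ ∧
      ∀ χ' : (Fin n → ℝ) → ℝ, IsCorrector A b j χ' →
        ∀ᵐ x ∂(volume : Measure (Fin n → ℝ)), χ' x = χ x := by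
  intro j
  obtain ⟨f, hf0, hf⟩ := hAB.exists_solvability hn hr hcenter j
  refine ⟨_, isCorrector_re_perExt hAB.perA hAB.perb hf, fun χ' hχ' => ?_⟩
  obtain ⟨f', hf0', hf', hχf⟩ := hχ'.exists_opL
  have hff : f' = f := hAB.eq_of_opL_ae_eq hn hf0' hf0 (hf'.trans hf.symm)
  refine ae_of_ae_cell (fun x k hx => ?_) ?_
  · rw [hχ'.2.1 x k, isPeriodic_perExt _ x k, hx]
  · filter_upwards [hχf, perExt_ae_eq (opU n f)] with x h1 h2
    rw [h2, ← hff, ← h1, Complex.ofReal_re]
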